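/- arXiv:0912.0223 — 5 statements merged into one kernel-verified Lean document; each statement's English description precedes it below -/
import Mathlib

section
/- (Main Theorem, Statement (A).) Let k ≥ 1, R > 0, and x ∈ E with ‖x‖ ≠ R. If α, β ∈ ℂ satisfy α + β = k, then ∫_{y ∈ S^k(R)} ω(x,y)^α dμH[k](y) = ∫_{y ∈ S^k(R)} ω(x,y)^β dμH[k](y) (integrals of ℂ-valued functions). -/
open MeasureTheory

open scoped NNReal ENNReal

/-- One-sided change of variables for Hausdorff measure. -/
theorem hausdorff_image_le_lintegral {X : Type*} [MetricSpace X] [MeasurableSpace X] [BorelSpace X]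
    (k : ℕ) (T : X → X) (g : X → ℝ≥0) (hg : Measurable g) (A : Set X) (hA : MeasurableSet A)
    (hpos : ∀ y ∈ A, 0 < g y)
    (hT : ∀ y ∈ A, ∀ z ∈ A, ∀ b : ℝ≥0, g y ≤ b → g z ≤ b → edist (T y) (T z) ≤ b * edist y z) :
    μH[k] (T '' A) ≤ ∫⁻ y in A, ((g y ^ k : ℝ≥0) : ℝ≥0∞) ∂μH[k] := by
  have key : ∀ t : ℝ≥0, 1 < t →
      μH[k] (T '' A) ≤ ((t ^ k : ℝ≥0) : ℝ≥0∞) * ∫⁻ y in A, ((g y ^ k : ℝ≥0) : ℝ≥0∞) ∂μH[k] := by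
    intro t ht
    have ht0 : 0 < t := zero_lt_one.trans ht
    let B : ℤ → Set X := fun n => A ∩ g ⁻¹' (Set.Ico (t ^ n) (t ^ (n + 1)))
    have hBm : ∀ n, MeasurableSet (B n) := fun n => hA.inter (hg measurableSet_Ico)
    have hBU : A = ⋃ n, B n := by
      ext y
      simp only [Set.mem_iUnion, B, Set.mem_inter_iff, Set.mem_preimage]
      constructor
      · intro hy
        obtain ⟨n, hn⟩ := NNReal.exists_mem_Ico_zpow (hpos y hy).ne' ht
        exact ⟨n, hy, hn⟩
      · rintro ⟨n, hy, _⟩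
        exact hy
    have hdisj : Pairwise (Function.onFun Disjoint B) := by
      intro m n hmn
      have h := (zpow_right_mono₀ ht.le).pairwise_disjoint_on_Ico_succ hmn
      refine Set.disjoint_left.2 fun y hy hy' => ?_
      exact Set.disjoint_left.1 h hy.2 hy'.2
    have hstep : ∀ n, μH[k] (T '' B n) ≤
        ((t ^ k : ℝ≥0) : ℝ≥0∞) * ∫⁻ y in B n, ((g y ^ k : ℝ≥0) : ℝ≥0∞) ∂μH[k] := by
      intro n
      have hL : LipschitzOnWith (t ^ (n + 1)) T (B n) := by
        intro y hy z hz
        exact hT y hy.1 z hz.1 _ hy.2.2.le hz.2.2.le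
      calc μH[k] (T '' B n) ≤ ((t ^ (n + 1) : ℝ≥0) : ℝ≥0∞) ^ (k : ℝ) * μH[k] (B n) :=
            hL.hausdorffMeasure_image_le (Nat.cast_nonneg k)
        _ = ((t ^ k : ℝ≥0) : ℝ≥0∞) * ((((t ^ n) ^ k : ℝ≥0) : ℝ≥0∞) * μH[k] (B n)) := by
            rw [ENNReal.rpow_natCast, zpow_add_one₀ ht0.ne', ← mul_assoc, ← ENNReal.coe_pow,
              ← ENNReal.coe_mul, mul_pow, mul_comm (t ^ k)]
        _ ≤ _ := by
            gcongr
            rw [← setLIntegral_const]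
            refine setLIntegral_mono' (hBm n) fun y hy => ?_
            exact ENNReal.coe_le_coe.2 (pow_le_pow_left₀ (zero_le) hy.2.1 k)
    calc μH[k] (T '' A) = μH[k] (⋃ n, T '' B n) := by rw [← Set.image_iUnion, ← hBU]
      _ ≤ ∑' n, μH[k] (T '' B n) := measure_iUnion_le _
      _ ≤ ∑' n, ((t ^ k : ℝ≥0) : ℝ≥0∞) * ∫⁻ y in B n, ((g y ^ k : ℝ≥0) : ℝ≥0∞) ∂μH[k] :=
          ENNReal.tsum_le_tsum hstep
      _ = _ := by
          rw [ENNReal.tsum_mul_left, ← lintegral_iUnion hBm hdisj, ← hBU]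
  set I := ∫⁻ y in A, ((g y ^ k : ℝ≥0) : ℝ≥0∞) ∂μH[k] with hI
  by_cases hItop : I = ∞
  · rw [hItop]; exact le_top
  have hcont : Filter.Tendsto (fun t : ℝ≥0 => ((t ^ k : ℝ≥0) : ℝ≥0∞) * I)
      (nhdsWithin 1 (Set.Ioi 1)) (nhds (((1 ^ k : ℝ≥0) : ℝ≥0∞) * I)) := by
    refine Filter.Tendsto.mono_left ?_ nhdsWithin_le_nhds
    refine ENNReal.Tendsto.mul_const ?_ (Or.inr hItop)
    exact ENNReal.tendsto_coe.2 ((continuous_pow k).tendsto 1)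
  rw [one_pow, ENNReal.coe_one, one_mul] at hcont
  exact ge_of_tendsto hcont (eventually_nhdsWithin_of_forall fun t ht => key t ht)

/-- Change of variables for an involution. -/
theorem map_withDensity_eq {X : Type*} [MetricSpace X] [MeasurableSpace X] [BorelSpace X]
    (k : ℕ) (T : X → X) (hTm : Measurable T) (g : X → ℝ≥0) (hg : Measurable g)
    (S : Set X) (hS : MeasurableSet S)
    (hTS : ∀ y ∈ S, T y ∈ S) (hTT : ∀ y ∈ S, T (T y) = y) (hgT : ∀ y ∈ S, g (T y) * g y = 1)
    (hT : ∀ y ∈ S, ∀ z ∈ S, ∀ b : ℝ≥0, g y ≤ b → g z ≤ b → edist (T y) (T z) ≤ b * edist y z) :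
    ((μH[k].restrict S).withDensity (fun y => ((g y ^ k : ℝ≥0) : ℝ≥0∞))).map T
      = (μH[k] : Measure X).restrict S := by
  set d : X → ℝ≥0∞ := fun y => ((g y ^ k : ℝ≥0) : ℝ≥0∞) with hd
  have hdm : Measurable d := (hg.pow_const k).coe_nnreal_ennreal
  have hle : (μH[k] : Measure X).restrict S ≤ ((μH[k].restrict S).withDensity d).map T := by
    refine Measure.le_iff.2 fun B hB => ?_
    have hm : MeasurableSet (T ⁻¹' B) := hTm hB
    rw [Measure.map_apply hTm hB, withDensity_apply _ hm, Measure.restrict_apply hB,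
      Measure.restrict_restrict hm]
    have him : B ∩ S ⊆ T '' (T ⁻¹' B ∩ S) := by
      rintro y ⟨hyB, hyS⟩
      refine ⟨T y, ⟨?_, hTS y hyS⟩, hTT y hyS⟩
      rw [Set.mem_preimage, hTT y hyS]; exact hyB
    refine (measure_mono him).trans ?_
    refine hausdorff_image_le_lintegral k T g hg _ (hm.inter hS) ?_ ?_
    · rintro y ⟨_, hy⟩
      refine pos_iff_ne_zero.2 fun h => ?_
      have := hgT y hy
      rw [h, mul_zero] at this
      exact zero_ne_one this
    · exact fun y hy z hz => hT y hy.2 z hz.2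
  have hle' : ∀ h : X → ℝ≥0∞, Measurable h →
      ∫⁻ y in S, h y ∂μH[k] ≤ ∫⁻ y in S, d y * h (T y) ∂μH[k] := by
    intro h hh
    refine (lintegral_mono' hle le_rfl).trans_eq ?_
    rw [lintegral_map hh hTm]
    exact lintegral_withDensity_eq_lintegral_mul _ hdm (hh.comp hTm)
  refine le_antisymm (Measure.le_iff.2 fun B hB => ?_) hle
  have h1 : Measurable (B.indicator (1 : X → ℝ≥0∞)) := measurable_one.indicator hB
  rw [← lintegral_indicator_one hB, lintegral_map h1 hTm, ← lintegral_indicator_one hB]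
  refine (lintegral_withDensity_eq_lintegral_mul _ hdm (h1.comp hTm)).trans_le ?_
  refine (hle' _ (hdm.mul (h1.comp hTm))).trans_eq ?_
  refine setLIntegral_congr_fun hS fun y hy => ?_
  have : d y * d (T y) = 1 := by
    simp only [hd]
    rw [← ENNReal.coe_mul, ← mul_pow, mul_comm, hgT y hy, one_pow, ENNReal.coe_one]
  simp only [Pi.mul_apply, Function.comp_apply]
  rw [hTT y hy, ← mul_assoc, this, one_mul]

/-- Main Theorem, Statement (A): if `α + β = k`, then
`∫_{S^k(R)} ω(x,y)^α dμH[k] = ∫_{S^k(R)} ω(x,y)^β dμH[k]`. -/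
theorem main_theorem_statement_A
    (k : ℕ) (hk : 1 ≤ k) (R : ℝ) (hR : 0 < R)
    (x : EuclideanSpace ℝ (Fin (k + 1))) (hx : ‖x‖ ≠ R)
    (α β : ℂ) (hab : α + β = (k : ℂ)) :
    ∫ y in Metric.sphere (0 : EuclideanSpace ℝ (Fin (k + 1))) R,
        ((|‖x‖ ^ 2 - ‖y‖ ^ 2| / ‖x - y‖ ^ 2 : ℝ) : ℂ) ^ α ∂μH[k]
      = ∫ y in Metric.sphere (0 : EuclideanSpace ℝ (Fin (k + 1))) R,
        ((|‖x‖ ^ 2 - ‖y‖ ^ 2| / ‖x - y‖ ^ 2 : ℝ) : ℂ) ^ β ∂μH[k] := by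
  set S := Metric.sphere (0 : EuclideanSpace ℝ (Fin (k + 1))) R with hSdef
  set c : ℝ := ‖x‖ ^ 2 - R ^ 2 with hc
  have hc0 : c ≠ 0 := by
    intro h
    apply hx
    have h2 : ‖x‖ ^ 2 = R ^ 2 := by linarith
    exact (pow_left_inj₀ (norm_nonneg x) hR.le two_ne_zero).1 h2
  have hS : MeasurableSet S := Metric.isClosed_sphere.measurableSet
  have hSn : ∀ y ∈ S, ‖y‖ = R := fun y hy => by simpa [hSdef] using hy
  have hne : ∀ y ∈ S, y - x ≠ 0 := by
    intro y hy h
    exact hx (by rw [← hSn y hy, sub_eq_zero.1 h])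
  let T : EuclideanSpace ℝ (Fin (k + 1)) → EuclideanSpace ℝ (Fin (k + 1)) := fun y => x + (c / ‖y - x‖ ^ 2) • (y - x)
  let g : EuclideanSpace ℝ (Fin (k + 1)) → ℝ≥0 := fun y => Real.toNNReal (|c| / ‖y - x‖ ^ 2)
  have hTm : Measurable T := by fun_prop
  have hg : Measurable g := by fun_prop
  have hgv : ∀ y, (g y : ℝ) = |c| / ‖y - x‖ ^ 2 := fun y => Real.coe_toNNReal _ (by positivity)
  have hTx : ∀ y, T y - x = (c / ‖y - x‖ ^ 2) • (y - x) := fun y => by simp [T]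
  have hTn : ∀ y ∈ S, ‖T y - x‖ = |c| / ‖y - x‖ := by
    intro y hy
    have := norm_pos_iff.2 (hne y hy)
    rw [hTx, norm_smul, Real.norm_eq_abs, abs_div, abs_of_nonneg (sq_nonneg ‖y - x‖)]
    field_simp
  have hTS : ∀ y ∈ S, T y ∈ S := by
    intro y hy
    have hp := norm_pos_iff.2 (hne y hy)
    have h1 : ‖x + (y - x)‖ ^ 2 = R ^ 2 := by rw [add_sub_cancel, hSn y hy]
    rw [norm_add_sq_real] at h1
    have h2 : ‖T y‖ ^ 2 = R ^ 2 := by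
      simp only [T]
      rw [norm_add_sq_real, inner_smul_right, norm_smul, mul_pow, Real.norm_eq_abs, sq_abs]
      have h3 : 2 * inner ℝ x (y - x) = - c - ‖y - x‖ ^ 2 := by rw [hc]; linarith
      have h4 : 2 * (c / ‖y - x‖ ^ 2 * inner ℝ x (y - x))
          = c / ‖y - x‖ ^ 2 * (- c - ‖y - x‖ ^ 2) := by rw [← h3]; ring
      rw [h4]
      have h5 : ‖x‖ ^ 2 = c + R ^ 2 := by rw [hc]; ring
      rw [h5]
      field_simp
      ring
    have := (pow_left_inj₀ (norm_nonneg _) hR.le two_ne_zero).1 h2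
    simpa [hSdef] using this
  have hTT : ∀ y ∈ S, T (T y) = y := by
    intro y hy
    have hp := norm_pos_iff.2 (hne y hy)
    have h : T (T y) - x = y - x := by
      rw [hTx (T y), hTn y hy, hTx y, smul_smul, div_pow, sq_abs]
      have : c / (c ^ 2 / ‖y - x‖ ^ 2) * (c / ‖y - x‖ ^ 2) = 1 := by field_simp
      rw [this, one_smul]
    exact sub_left_injective h
  have hgT : ∀ y ∈ S, g (T y) * g y = 1 := by
    intro y hy
    have hp := norm_pos_iff.2 (hne y hy)
    have hcp : 0 < |c| := abs_pos.2 hc0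
    apply NNReal.coe_injective
    push_cast
    rw [hgv, hgv, hTn y hy]
    field_simp
  have hdist : ∀ y ∈ S, ∀ z ∈ S, dist (T y) (T z) = |c| / (‖y - x‖ * ‖z - x‖) * dist y z := by
    intro y hy z hz
    have h := dist_div_norm_sq_smul (hne y hy) (hne z hz) 1
    have e : ∀ w, T w - x = c • ((1 / ‖w - x‖) ^ 2 • (w - x)) := by
      intro w
      rw [hTx, smul_smul]; congr 1; ring
    rw [← dist_sub_right (T y) (T z) x, e, e, dist_smul₀, h, dist_sub_right, Real.norm_eq_abs]
    ring
  have hT : ∀ y ∈ S, ∀ z ∈ S, ∀ b : ℝ≥0, g y ≤ b → g z ≤ b →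
      edist (T y) (T z) ≤ b * edist y z := by
    intro y hy z hz b hyb hzb
    have hp := norm_pos_iff.2 (hne y hy)
    have hq := norm_pos_iff.2 (hne z hz)
    have hyb' : |c| / ‖y - x‖ ^ 2 ≤ b := by rw [← hgv]; exact_mod_cast hyb
    have hzb' : |c| / ‖z - x‖ ^ 2 ≤ b := by rw [← hgv]; exact_mod_cast hzb
    have hb : |c| / (‖y - x‖ * ‖z - x‖) ≤ b := by
      refine (pow_le_pow_iff_left₀ (by positivity) b.2 two_ne_zero).1 ?_
      calc (|c| / (‖y - x‖ * ‖z - x‖)) ^ 2 = (|c| / ‖y - x‖ ^ 2) * (|c| / ‖z - x‖ ^ 2) := by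
            field_simp
        _ ≤ (b : ℝ) * b := by gcongr
        _ = (b : ℝ) ^ 2 := by ring
    have : nndist (T y) (T z) ≤ b * nndist y z := by
      rw [← NNReal.coe_le_coe]
      push_cast
      rw [hdist y hy z hz]
      gcongr
    rw [edist_nndist, edist_nndist]
    exact_mod_cast this
  have hmap := map_withDensity_eq k T hTm g hg S hS hTS hTT hgT hT
  have hω : ∀ y ∈ S, |‖x‖ ^ 2 - ‖y‖ ^ 2| / ‖x - y‖ ^ 2 = g y := by
    intro y hy
    rw [hgv, hSn y hy, norm_sub_rev]
  have hL : ∀ γ : ℂ, ∫ y in S, ((|‖x‖ ^ 2 - ‖y‖ ^ 2| / ‖x - y‖ ^ 2 : ℝ) : ℂ) ^ γ ∂μH[k]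
      = ∫ y in S, ((g y : ℝ) : ℂ) ^ γ ∂μH[k] := by
    intro γ
    refine setIntegral_congr_fun hS fun y hy => ?_
    beta_reduce
    rw [hω y hy]
  rw [hL, hL]
  have hgc : Measurable fun y => ((g y : ℝ) : ℂ) ^ α := by fun_prop
  calc ∫ y in S, ((g y : ℝ) : ℂ) ^ α ∂μH[k]
      = ∫ y, ((g y : ℝ) : ℂ) ^ α
          ∂(((μH[k].restrict S).withDensity (fun y => ((g y ^ k : ℝ≥0) : ℝ≥0∞))).map T) := by
        rw [hmap]
    _ = ∫ y in S, (g y ^ k : ℝ≥0) • (((g (T y) : ℝ) : ℂ) ^ α) ∂μH[k] := by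
        rw [integral_map hTm.aemeasurable hgc.aestronglyMeasurable,
          integral_withDensity_eq_integral_smul (hg.pow_const k)]
    _ = ∫ y in S, ((g y : ℝ) : ℂ) ^ β ∂μH[k] := by
        refine setIntegral_congr_fun hS fun y hy => ?_
        have h1 := hgT y hy
        have h0 : g y ≠ 0 := by
          intro h
          rw [h, mul_zero] at h1
          exact zero_ne_one h1
        have h2 : g (T y) = (g y)⁻¹ := eq_inv_of_mul_eq_one_left h1
        have h0c : ((g y : ℝ) : ℂ) ≠ 0 := by exact_mod_cast h0
        have hβ : β = (k : ℂ) - α := by rw [← hab]; ring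
        beta_reduce
        rw [h2, hβ, Complex.cpow_sub _ _ h0c, Complex.cpow_natCast, NNReal.smul_def,
          Complex.real_smul, NNReal.coe_inv, Complex.ofReal_inv, Complex.inv_cpow]
        · push_cast; rw [div_eq_mul_inv]
        · rw [Complex.arg_ofReal_of_nonneg (NNReal.coe_nonneg (g y))]
          exact Real.pi_pos.ne
end

section
/- (Main Theorem, Statement (B).) Let k ≥ 1, R > 0, and x ∈ E with 0 < ‖x‖ and ‖x‖ ≠ R. If α, β ∈ ℝ satisfy ∫_{y ∈ S^k(R)} ω(x,y)^α dμH[k](y) = ∫_{y ∈ S^k(R)} ω(x,y)^β dμH[k](y) (real powers, real-valued integrals), then α + β = k or α = β. -/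
open MeasureTheory

/-- one inequality of the symmetry, abstractly -/
lemma core_le {X : Type*} [MetricSpace X] [MeasurableSpace X] [BorelSpace X]
    (k : ℕ) (S : Set X) (hS : MeasurableSet S) (W : X → ℝ) (hWm : Measurable W)
    (T : X → X) (hpos : ∀ y ∈ S, 0 < W y) (hTS : ∀ y ∈ S, T y ∈ S)
    (hTT : ∀ y ∈ S, T (T y) = y) (hWT : ∀ y ∈ S, W (T y) = (W y)⁻¹)
    (hL : ∀ b : ℝ, ∀ u ∈ S, ∀ v ∈ S, W u ≤ b → W v ≤ b → dist (T u) (T v) ≤ b * dist u v)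
    (α : ℝ) :
    ∫⁻ y in S, ENNReal.ofReal (W y ^ α) ∂μH[k] ≤
      ∫⁻ y in S, ENNReal.ofReal (W y ^ ((k : ℝ) - α)) ∂μH[k] := by
  have key : ∀ δ : ℝ, 0 < δ → ∫⁻ y in S, ENNReal.ofReal (W y ^ α) ∂μH[k] ≤
      ENNReal.ofReal (Real.exp (δ * (|α| + |(k : ℝ) - α|))) *
      ∫⁻ y in S, ENNReal.ofReal (W y ^ ((k : ℝ) - α)) ∂μH[k] := by
    intro δ hδ
    let N : X → ℤ := fun y => ⌊Real.log (W y) / δ⌋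
    let M : X → ℤ := fun y => ⌊-Real.log (W y) / δ⌋
    have hN : Measurable N := ((Real.measurable_log.comp hWm).div_const δ).floor
    have hM : Measurable M := ((Real.measurable_log.comp hWm).neg.div_const δ).floor
    have split : ∀ (P : X → ℤ), Measurable P → ∀ f : X → ENNReal,
        ∫⁻ y in S, f y ∂μH[k] = ∑' n : ℤ, ∫⁻ y in S ∩ P ⁻¹' {n}, f y ∂μH[k] := by
      intro P hP f
      rw [← lintegral_iUnion (fun n => hS.inter (hP (measurableSet_singleton n)))]
      · congr 2
        ext y; simp
      · intro i j hij
        rw [Function.onFun, Set.disjoint_left]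
        rintro y ⟨_, h1⟩ ⟨_, h2⟩
        exact hij (h1.symm.trans h2)
    rw [split N hN, split M hM, ← ENNReal.tsum_mul_left]
    refine ENNReal.tsum_le_tsum fun n => ?_
    have hA : MeasurableSet (S ∩ N ⁻¹' {n}) := hS.inter (hN (measurableSet_singleton n))
    have hB : MeasurableSet (S ∩ M ⁻¹' {n}) := hS.inter (hM (measurableSet_singleton n))
    have habs : ∀ a l : ℝ, |l - n * δ| ≤ δ → |a * l - a * (n * δ)| ≤ |a| * δ := by
      intro a l h
      rw [← mul_sub, abs_mul]
      gcongr
    have hNb : ∀ l : ℝ, ⌊l / δ⌋ = n → n * δ ≤ l ∧ |l - n * δ| ≤ δ := by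
      intro l h
      rw [Int.floor_eq_iff, le_div_iff₀ hδ, div_lt_iff₀ hδ] at h
      refine ⟨h.1, ?_⟩
      rw [abs_le]
      constructor <;> nlinarith [h.1, h.2]
    have h1 : ∫⁻ y in S ∩ N ⁻¹' {n}, ENNReal.ofReal (W y ^ α) ∂μH[k] ≤
        ENNReal.ofReal (Real.exp (α * (n * δ) + |α| * δ)) * μH[k] (S ∩ N ⁻¹' {n}) := by
      rw [← setLIntegral_const]
      refine setLIntegral_mono' hA ?_
      rintro y ⟨hy, hn⟩
      apply ENNReal.ofReal_le_ofReal
      rw [Real.rpow_def_of_pos (hpos y hy), Real.exp_le_exp]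
      have := abs_le.1 (habs α _ (hNb _ hn).2)
      nlinarith [this.2]
    have h2 : ENNReal.ofReal (Real.exp (-((k - α) * (n * δ)) - |k - α| * δ)) *
        μH[k] (S ∩ M ⁻¹' {n}) ≤
        ∫⁻ y in S ∩ M ⁻¹' {n}, ENNReal.ofReal (W y ^ ((k : ℝ) - α)) ∂μH[k] := by
      rw [← setLIntegral_const]
      refine setLIntegral_mono' hB ?_
      rintro y ⟨hy, hn⟩
      apply ENNReal.ofReal_le_ofReal
      rw [Real.rpow_def_of_pos (hpos y hy), Real.exp_le_exp]
      have := abs_le.1 (habs (k - α) _ (hNb _ hn).2)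
      nlinarith [this.2]
    have h3 : μH[k] (S ∩ N ⁻¹' {n}) ≤
        ENNReal.ofReal (Real.exp (-(n * δ))) ^ k * μH[k] (S ∩ M ⁻¹' {n}) := by
      have hsub : S ∩ N ⁻¹' {n} ⊆ T '' (S ∩ M ⁻¹' {n}) := by
        rintro y ⟨hy, hn⟩
        refine ⟨T y, ⟨hTS y hy, ?_⟩, hTT y hy⟩
        change ⌊-Real.log (W (T y)) / δ⌋ = n
        rw [hWT y hy, Real.log_inv, neg_neg]
        exact hn
      have hlip : LipschitzOnWith (Real.toNNReal (Real.exp (-(n * δ)))) T (S ∩ M ⁻¹' {n}) := by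
        have hb : ∀ y ∈ S ∩ M ⁻¹' {n}, W y ≤ Real.exp (-(n * δ)) := by
          rintro y ⟨hy, hn⟩
          rw [← Real.log_le_iff_le_exp (hpos y hy)]
          have := (hNb _ hn).1
          linarith
        refine LipschitzOnWith.of_dist_le_mul fun u hu v hv => ?_
        rw [Real.coe_toNNReal _ (Real.exp_pos _).le]
        exact hL _ u hu.1 v hv.1 (hb u hu) (hb v hv)
      refine (measure_mono hsub).trans ?_
      have := hlip.hausdorffMeasure_image_le (d := (k : ℝ)) (by positivity)
      rw [ENNReal.rpow_natCast] at this
      exact this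
    calc _ ≤ _ := h1
      _ ≤ ENNReal.ofReal (Real.exp (α * (n * δ) + |α| * δ)) *
          (ENNReal.ofReal (Real.exp (-(n * δ))) ^ k * μH[k] (S ∩ M ⁻¹' {n})) := by gcongr
      _ = ENNReal.ofReal (Real.exp (δ * (|α| + |(k : ℝ) - α|))) *
          (ENNReal.ofReal (Real.exp (-((k - α) * (n * δ)) - |k - α| * δ)) *
            μH[k] (S ∩ M ⁻¹' {n})) := by
        rw [← mul_assoc _ (_ ^ k) _, ← mul_assoc _ (ENNReal.ofReal _) _, ← ENNReal.ofReal_pow (Real.exp_pos _).le,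
          ← ENNReal.ofReal_mul (Real.exp_pos _).le, ← ENNReal.ofReal_mul (Real.exp_pos _).le,
          ← Real.exp_nat_mul, ← Real.exp_add, ← Real.exp_add]
        congr 3
        ring_nf
      _ ≤ _ := by gcongr
  have hc : Filter.Tendsto (fun δ : ℝ => ENNReal.ofReal (Real.exp (δ * (|α| + |(k : ℝ) - α|))) *
      ∫⁻ y in S, ENNReal.ofReal (W y ^ ((k : ℝ) - α)) ∂μH[k]) (nhdsWithin 0 (Set.Ioi 0))
      (nhds (1 * ∫⁻ y in S, ENNReal.ofReal (W y ^ ((k : ℝ) - α)) ∂μH[k])) := by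
    refine ENNReal.Tendsto.mul_const ?_ (Or.inl one_ne_zero)
    have : Continuous fun δ : ℝ => ENNReal.ofReal (Real.exp (δ * (|α| + |(k : ℝ) - α|))) :=
      ENNReal.continuous_ofReal.comp (by fun_prop)
    have h0 := this.tendsto 0
    simp only [zero_mul, Real.exp_zero, ENNReal.ofReal_one] at h0
    exact h0.mono_left nhdsWithin_le_nhds
  rw [one_mul] at hc
  refine ge_of_tendsto hc ?_
  filter_upwards [self_mem_nhdsWithin] with δ hδ using key δ hδ

/-- the graph chart at `R • e` of the sphere -/
noncomputable def chart {E : Type*} [NormedAddCommGroup E] [InnerProductSpace ℝ E]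
    (R : ℝ) (e : E) (v : (Submodule.span ℝ {e})ᗮ) : E :=
  (v : E) + Real.sqrt (R ^ 2 - ‖(v : E)‖ ^ 2) • e

lemma chart_contDiffAt {E : Type*} [NormedAddCommGroup E] [InnerProductSpace ℝ E]
    (R : ℝ) (hR : 0 < R) (e : E) : ContDiffAt ℝ 1 (chart R e) 0 := by
  unfold chart
  have hc : ContDiff ℝ 1 (fun v : (Submodule.span ℝ {e})ᗮ => (v : E)) :=
    (Submodule.subtypeL (Submodule.span ℝ {e})ᗮ).contDiff
  refine hc.contDiffAt.add (ContDiffAt.smul ?_ contDiffAt_const)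
  refine ContDiffAt.sqrt ?_ ?_
  · exact (contDiff_const.sub (hc.norm_sq ℝ)).contDiffAt
  · simp [hR.ne']

lemma sub_mem_orth {E : Type*} [NormedAddCommGroup E] [InnerProductSpace ℝ E]
    (e : E) (he : ‖e‖ = 1) (y : E) : y - (inner ℝ e y : ℝ) • e ∈ (Submodule.span ℝ {e})ᗮ := by
  rw [Submodule.mem_orthogonal_singleton_iff_inner_right, inner_sub_right, inner_smul_right,
    real_inner_self_eq_norm_sq, he]
  ring

/-- projection along `e` -/
noncomputable def proj {E : Type*} [NormedAddCommGroup E] [InnerProductSpace ℝ E]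
    (e : E) (he : ‖e‖ = 1) (y : E) : (Submodule.span ℝ {e})ᗮ :=
  ⟨y - (inner ℝ e y : ℝ) • e, sub_mem_orth e he y⟩

lemma norm_proj_sq {E : Type*} [NormedAddCommGroup E] [InnerProductSpace ℝ E]
    (e : E) (he : ‖e‖ = 1) (y : E) : ‖proj e he y‖ ^ 2 = ‖y‖ ^ 2 - (inner ℝ e y : ℝ) ^ 2 := by
  change ‖y - (inner ℝ e y : ℝ) • e‖ ^ 2 = _
  rw [norm_sub_sq_real, inner_smul_right, norm_smul, he, real_inner_comm e y, Real.norm_eq_abs,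
    mul_one, sq_abs]
  ring

lemma proj_lip {E : Type*} [NormedAddCommGroup E] [InnerProductSpace ℝ E]
    (e : E) (he : ‖e‖ = 1) : LipschitzWith 1 (proj e he) := by
  refine LipschitzWith.of_dist_le_mul fun u v => ?_
  rw [NNReal.coe_one, one_mul, dist_eq_norm, dist_eq_norm]
  have : proj e he u - proj e he v = proj e he (u - v) := by
    apply Subtype.ext
    simp only [proj, AddSubgroupClass.coe_sub, inner_sub_right, sub_smul]
    abel
  rw [this]
  have h := norm_proj_sq e he (u - v)
  exact abs_le_of_sq_le_sq' (by nlinarith [sq_nonneg (inner ℝ e (u - v) : ℝ)]) (norm_nonneg _) |>.2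

lemma chart_proj {E : Type*} [NormedAddCommGroup E] [InnerProductSpace ℝ E]
    (R : ℝ) (e : E) (he : ‖e‖ = 1) (y : E) (hy : ‖y‖ = R) (hp : 0 ≤ (inner ℝ e y : ℝ)) :
    chart R e (proj e he y) = y := by
  unfold chart
  have h := norm_proj_sq e he y
  rw [Submodule.coe_norm] at h
  rw [h, hy, sub_sub_cancel, Real.sqrt_sq hp]
  simp [proj]

lemma proj_chart {E : Type*} [NormedAddCommGroup E] [InnerProductSpace ℝ E]
    (R : ℝ) (e : E) (he : ‖e‖ = 1) (v : (Submodule.span ℝ {e})ᗮ) :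
    proj e he (chart R e v) = v := by
  have hv := (Submodule.mem_orthogonal_singleton_iff_inner_right).1 v.2
  apply Subtype.ext
  simp only [proj, chart, inner_add_right, inner_smul_right, hv, real_inner_self_eq_norm_sq, he]
  simp

lemma norm_chart {E : Type*} [NormedAddCommGroup E] [InnerProductSpace ℝ E]
    (R : ℝ) (hR : 0 < R) (e : E) (he : ‖e‖ = 1) (v : (Submodule.span ℝ {e})ᗮ) (hv : ‖v‖ ≤ R) :
    ‖chart R e v‖ = R := by
  have hv' := (Submodule.mem_orthogonal_singleton_iff_inner_left).1 v.2
  rw [← sq_eq_sq₀ (norm_nonneg _) hR.le]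
  unfold chart
  rw [norm_add_sq_real, inner_smul_right, hv', norm_smul, he, mul_one, Real.norm_eq_abs, sq_abs,
    Real.sq_sqrt]
  · ring
  · have : ‖(v : E)‖ ≤ R := hv
    nlinarith [norm_nonneg (v : E)]

lemma haar_orth (k : ℕ) (e : EuclideanSpace ℝ (Fin (k + 1))) (he : ‖e‖ = 1) :
    (μH[k] : Measure (Submodule.span ℝ {e})ᗮ).IsAddHaarMeasure := by
  have : Fact (Module.finrank ℝ (EuclideanSpace ℝ (Fin (k + 1))) = k + 1) := ⟨by simp⟩
  have hf : Module.finrank ℝ (Submodule.span ℝ {e})ᗮ = k :=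
    Submodule.finrank_orthogonal_span_singleton (by rintro rfl; simp at he)
  have := MeasureTheory.isAddHaarMeasure_hausdorffMeasure (E := (Submodule.span ℝ {e})ᗮ)
  rwa [hf] at this

lemma exists_unit {E : Type*} [NormedAddCommGroup E] [InnerProductSpace ℝ E]
    (R : ℝ) (hR : 0 < R) (p : E) (hp : ‖p‖ = R) : ∃ e : E, ‖e‖ = 1 ∧ p = R • e := by
  refine ⟨R⁻¹ • p, ?_, ?_⟩
  · rw [norm_smul, hp, Real.norm_eq_abs, abs_of_pos (by positivity)]; field_simp
  · rw [smul_smul, mul_inv_cancel₀ hR.ne', one_smul]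

lemma sphere_lt_top (k : ℕ) (R : ℝ) (hR : 0 < R) :
    μH[k] (Metric.sphere (0 : EuclideanSpace ℝ (Fin (k + 1))) R) < ⊤ := by
  refine (isCompact_sphere _ _).measure_lt_top_of_nhdsWithin fun p hp => ?_
  obtain ⟨e, he, hpe⟩ := exists_unit R hR p (by simpa using hp)
  have := haar_orth k e he
  obtain ⟨K, t, ht, hK⟩ := (chart_contDiffAt R hR e).exists_lipschitzOnWith
  have hproj : proj e he p = 0 := by
    apply Subtype.ext
    simp [proj, hpe, inner_smul_right, real_inner_self_eq_norm_sq, he]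
  have hcont : ContinuousAt (proj e he) p := (proj_lip e he).continuous.continuousAt
  have h1 : (proj e he) ⁻¹' (t ∩ Metric.ball 0 1) ∈ nhds p := by
    apply hcont
    rw [hproj]
    exact Filter.inter_mem ht (Metric.ball_mem_nhds _ one_pos)
  have h2 : {y | 0 < (inner ℝ e y : ℝ)} ∈ nhds p := by
    refine (isOpen_lt continuous_const (by fun_prop)).mem_nhds ?_
    simp [hpe, inner_smul_right, real_inner_self_eq_norm_sq, he, hR]
  refine ⟨Metric.sphere 0 R ∩ ((proj e he) ⁻¹' (t ∩ Metric.ball 0 1) ∩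
    {y | 0 < (inner ℝ e y : ℝ)}), ?_, ?_⟩
  · exact Filter.inter_mem self_mem_nhdsWithin
      (mem_nhdsWithin_of_mem_nhds (Filter.inter_mem h1 h2))
  · have hsub : Metric.sphere 0 R ∩ ((proj e he) ⁻¹' (t ∩ Metric.ball 0 1) ∩
        {y | 0 < (inner ℝ e y : ℝ)}) ⊆ chart R e '' (t ∩ Metric.ball 0 1) := by
      rintro y ⟨hy, hy1, hy2⟩
      exact ⟨_, hy1, chart_proj R e he y (by simpa using hy) (le_of_lt hy2)⟩
    refine (measure_mono hsub).trans_lt ?_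
    refine ((hK.mono Set.inter_subset_left).hausdorffMeasure_image_le
      (d := (k : ℝ)) (by positivity)).trans_lt ?_
    refine ENNReal.mul_lt_top (by simp) ?_
    exact (measure_mono Set.inter_subset_right).trans_lt measure_ball_lt_top

lemma sphere_inter_pos (k : ℕ) (R : ℝ) (hR : 0 < R) (p : EuclideanSpace ℝ (Fin (k + 1)))
    (hp : ‖p‖ = R) (U : Set (EuclideanSpace ℝ (Fin (k + 1)))) (hU : U ∈ nhds p) :
    0 < μH[k] (Metric.sphere (0 : EuclideanSpace ℝ (Fin (k + 1))) R ∩ U) := by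
  obtain ⟨e, he, hpe⟩ := exists_unit R hR p hp
  have := haar_orth k e he
  have h0 : chart R e 0 = p := by
    simp [chart, hpe, Real.sqrt_sq hR.le]
  have hc : chart R e ⁻¹' U ∈ nhds 0 := by
    apply (chart_contDiffAt R hR e).continuousAt
    rwa [h0]
  have hV : chart R e ⁻¹' U ∩ Metric.ball 0 R ∈ nhds 0 :=
    Filter.inter_mem hc (Metric.ball_mem_nhds _ hR)
  have hsub : chart R e ⁻¹' U ∩ Metric.ball 0 R ⊆
      proj e he '' (Metric.sphere (0 : EuclideanSpace ℝ (Fin (k + 1))) R ∩ U) := by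
    rintro v ⟨hv1, hv2⟩
    refine ⟨chart R e v, ⟨?_, hv1⟩, proj_chart R e he v⟩
    rw [mem_sphere_zero_iff_norm]
    exact norm_chart R hR e he v (by simpa using (mem_ball_zero_iff.1 hv2).le)
  have h1 := MeasureTheory.Measure.measure_pos_of_mem_nhds (μH[k] : Measure (Submodule.span ℝ {e})ᗮ) hV
  refine h1.trans_le ((measure_mono hsub).trans ?_)
  have := ((proj_lip e he).lipschitzOnWith (s := Metric.sphere 0 R ∩ U)).hausdorffMeasure_image_le
    (d := (k : ℝ)) (by positivity)
  simpa using this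

section geom
variable {E : Type*} [NormedAddCommGroup E] [InnerProductSpace ℝ E]

/-- inversion centred at `x` preserving the sphere of radius `R` -/
noncomputable def Tm (x : E) (R : ℝ) (y : E) : E :=
  x + (‖x‖ ^ 2 - R ^ 2) • ((1 / ‖y - x‖) ^ 2 • (y - x))

/-- conformal factor -/
noncomputable def Wm (x : E) (R : ℝ) (y : E) : ℝ := |‖x‖ ^ 2 - R ^ 2| / ‖x - y‖ ^ 2

lemma c_ne (x : E) (R : ℝ) (hR : 0 < R) (hx : ‖x‖ ≠ R) : ‖x‖ ^ 2 - R ^ 2 ≠ 0 := by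
  intro h
  exact hx ((sq_eq_sq₀ (norm_nonneg _) hR.le).1 (by linarith))

lemma sub_ne (x : E) (R : ℝ) (hx : ‖x‖ ≠ R) (y : E) (hy : ‖y‖ = R) : y - x ≠ 0 := by
  intro h
  rw [sub_eq_zero] at h
  subst h
  exact hx hy

lemma Wm_pos (x : E) (R : ℝ) (hR : 0 < R) (hx : ‖x‖ ≠ R) (y : E) (hy : ‖y‖ = R) :
    0 < Wm x R y := by
  have h1 := abs_pos.2 (c_ne x R hR hx)
  have h2 := norm_pos_iff.2 (sub_ne x R hx y hy)
  rw [norm_sub_rev] at h2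
  unfold Wm
  positivity

lemma Tm_sub (x : E) (R : ℝ) (y : E) :
    Tm x R y - x = ((‖x‖ ^ 2 - R ^ 2) * (1 / ‖y - x‖) ^ 2) • (y - x) := by
  simp [Tm, smul_smul]

lemma norm_Tm_sub (x : E) (R : ℝ) (hx : ‖x‖ ≠ R) (y : E) (hy : ‖y‖ = R) :
    ‖Tm x R y - x‖ = |‖x‖ ^ 2 - R ^ 2| / ‖y - x‖ := by
  have h2 := norm_pos_iff.2 (sub_ne x R hx y hy)
  rw [Tm_sub, norm_smul, Real.norm_eq_abs, abs_mul, abs_of_nonneg (a := (1 / ‖y - x‖) ^ 2) (by positivity)]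
  field_simp

lemma Tm_mem (x : E) (R : ℝ) (hR : 0 < R) (hx : ‖x‖ ≠ R) (y : E) (hy : ‖y‖ = R) :
    ‖Tm x R y‖ = R := by
  have h2 := norm_pos_iff.2 (sub_ne x R hx y hy)
  rw [← sq_eq_sq₀ (norm_nonneg _) hR.le]
  have h3 : R ^ 2 = ‖x‖ ^ 2 + 2 * inner ℝ x (y - x) + ‖y - x‖ ^ 2 := by
    rw [← norm_add_sq_real, add_sub_cancel, hy]
  have h4 : Tm x R y = x + ((‖x‖ ^ 2 - R ^ 2) * (1 / ‖y - x‖) ^ 2) • (y - x) := by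
    simp [Tm, smul_smul]
  rw [h4, norm_add_sq_real, inner_smul_right, norm_smul, Real.norm_eq_abs, mul_pow, sq_abs]
  have h5 : (inner ℝ x (y - x) : ℝ) = (R ^ 2 - ‖x‖ ^ 2 - ‖y - x‖ ^ 2) / 2 := by linarith
  rw [h5]
  field_simp
  ring

lemma Tm_Tm (x : E) (R : ℝ) (hR : 0 < R) (hx : ‖x‖ ≠ R) (y : E) (hy : ‖y‖ = R) :
    Tm x R (Tm x R y) = y := by
  have h1 := c_ne x R hR hx
  have h2 := norm_pos_iff.2 (sub_ne x R hx y hy)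
  have : Tm x R (Tm x R y) - x = y - x := by
    rw [Tm_sub, norm_Tm_sub x R hx y hy, Tm_sub, smul_smul]
    conv_rhs => rw [← one_smul ℝ (y - x)]
    congr 1
    rw [one_div, inv_pow, div_pow, sq_abs]
    field_simp
  exact sub_left_injective this

lemma Wm_Tm (x : E) (R : ℝ) (hR : 0 < R) (hx : ‖x‖ ≠ R) (y : E) (hy : ‖y‖ = R) :
    Wm x R (Tm x R y) = (Wm x R y)⁻¹ := by
  have h1 := abs_pos.2 (c_ne x R hR hx)
  have h2 := norm_pos_iff.2 (sub_ne x R hx y hy)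
  unfold Wm
  rw [norm_sub_rev x, norm_Tm_sub x R hx y hy, norm_sub_rev x]
  field_simp

lemma Tm_dist (x : E) (R : ℝ) (hR : 0 < R) (hx : ‖x‖ ≠ R) (b : ℝ) (u : E) (hu : ‖u‖ = R)
    (v : E) (hv : ‖v‖ = R) (hub : Wm x R u ≤ b) (hvb : Wm x R v ≤ b) :
    dist (Tm x R u) (Tm x R v) ≤ b * dist u v := by
  have h1 := abs_pos.2 (c_ne x R hR hx)
  have h2 := norm_pos_iff.2 (sub_ne x R hx u hu)
  have h3 := norm_pos_iff.2 (sub_ne x R hx v hv)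
  have hb : 0 < b := (Wm_pos x R hR hx u hu).trans_le hub
  unfold Tm
  rw [dist_add_left, dist_smul₀, dist_div_norm_sq_smul (sub_ne x R hx u hu) (sub_ne x R hx v hv),
    dist_sub_right, ← mul_assoc]
  gcongr
  unfold Wm at hub hvb
  rw [norm_sub_rev] at hub hvb
  rw [div_le_iff₀ (by positivity)] at hub hvb
  rw [Real.norm_eq_abs, one_pow, mul_one_div, div_le_iff₀ (by positivity)]
  refine (abs_le_of_sq_le_sq' ?_ (by positivity)).2
  calc |‖x‖ ^ 2 - R ^ 2| ^ 2 = |‖x‖ ^ 2 - R ^ 2| * |‖x‖ ^ 2 - R ^ 2| := by ring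
    _ ≤ (b * ‖u - x‖ ^ 2) * (b * ‖v - x‖ ^ 2) := by gcongr
    _ = _ := by ring

lemma exists_Wm_ne (x : E) (R : ℝ) (hR : 0 < R) (hx0 : 0 < ‖x‖) (hx : ‖x‖ ≠ R) :
    ∃ y : E, ‖y‖ = R ∧ Wm x R y ≠ 1 := by
  by_contra! hcon
  have key : ∀ s : ℝ, |s| = R → |‖x‖ ^ 2 - R ^ 2| = (‖x‖ - s) ^ 2 := by
    intro s hs
    have hn : ‖(s / ‖x‖) • x‖ = R := by
      rw [norm_smul, Real.norm_eq_abs, abs_div, abs_norm, hs]; field_simp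
    have h2 := norm_pos_iff.2 (sub_ne x R hx _ hn)
    have h := hcon _ hn
    unfold Wm at h
    rw [norm_sub_rev] at h
    rw [div_eq_one_iff_eq (by positivity)] at h
    rw [h]
    have : (s / ‖x‖) • x - x = ((s - ‖x‖) / ‖x‖) • x := by
      rw [sub_div, sub_smul, div_self hx0.ne', one_smul]
    rw [this, norm_smul, Real.norm_eq_abs, abs_div, abs_norm, div_mul_cancel₀ _ hx0.ne', sq_abs]
    ring
  have h1 := key R (abs_of_pos hR)
  have h2 := key (-R) (by rw [abs_neg, abs_of_pos hR])
  have := mul_pos hx0 hR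
  nlinarith
end geom

lemma Wm_measurable (k : ℕ) (x : EuclideanSpace ℝ (Fin (k + 1))) (R : ℝ) :
    Measurable (Wm x R) := by
  unfold Wm
  fun_prop

lemma Wm_contOn {E : Type*} [NormedAddCommGroup E] [InnerProductSpace ℝ E]
    (x : E) (R : ℝ) (hx : ‖x‖ ≠ R) : ContinuousOn (Wm x R) (Metric.sphere 0 R) := by
  unfold Wm
  refine ContinuousOn.div continuousOn_const (by fun_prop) ?_
  intro y hy
  have h2 := norm_pos_iff.2 (sub_ne x R hx y (by simpa using hy))
  rw [norm_sub_rev] at h2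
  positivity

lemma Wm_int (k : ℕ) (x : EuclideanSpace ℝ (Fin (k + 1))) (R : ℝ) (hR : 0 < R) (hx : ‖x‖ ≠ R)
    (α : ℝ) : IntegrableOn (fun y => Wm x R y ^ α) (Metric.sphere 0 R) μH[k] := by
  have hc : ContinuousOn (fun y => Wm x R y ^ α) (Metric.sphere 0 R) :=
    (Wm_contOn x R hx).rpow_const
      fun y hy => Or.inl (Wm_pos x R hR hx y (by simpa using hy)).ne'
  obtain ⟨C, hC⟩ := (isCompact_sphere (0 : EuclideanSpace ℝ (Fin (k + 1))) R).exists_bound_of_continuousOn hc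
  refine Measure.integrableOn_of_bounded (M := C) (sphere_lt_top k R hR).ne ?_ ?_
  · exact ((Wm_measurable k x R).pow_const α).aestronglyMeasurable
  · exact (ae_restrict_iff' Metric.isClosed_sphere.measurableSet).2 (ae_of_all _ hC)

lemma Wm_symm (k : ℕ) (x : EuclideanSpace ℝ (Fin (k + 1))) (R : ℝ) (hR : 0 < R) (hx : ‖x‖ ≠ R)
    (α : ℝ) : ∫ y in Metric.sphere 0 R, Wm x R y ^ α ∂μH[k] =
      ∫ y in Metric.sphere 0 R, Wm x R y ^ ((k : ℝ) - α) ∂μH[k] := by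
  have hS : MeasurableSet (Metric.sphere (0 : EuclideanSpace ℝ (Fin (k + 1))) R) :=
    Metric.isClosed_sphere.measurableSet
  have hle := core_le k (Metric.sphere (0 : EuclideanSpace ℝ (Fin (k + 1))) R) hS (Wm x R)
    (Wm_measurable k x R) (Tm x R)
    (fun y hy => Wm_pos x R hR hx y (by simpa using hy))
    (fun y hy => by simpa using Tm_mem x R hR hx y (by simpa using hy))
    (fun y hy => Tm_Tm x R hR hx y (by simpa using hy))
    (fun y hy => Wm_Tm x R hR hx y (by simpa using hy))
    (fun b u hu v hv => Tm_dist x R hR hx b u (by simpa using hu) v (by simpa using hv))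
  have hI : ∀ γ : ℝ, ∫ y in Metric.sphere 0 R, Wm x R y ^ γ ∂μH[k] =
      (∫⁻ y in Metric.sphere 0 R, ENNReal.ofReal (Wm x R y ^ γ) ∂μH[k]).toReal := by
    intro γ
    refine integral_eq_lintegral_of_nonneg_ae ?_ ?_
    · refine ae_of_all _ fun y => ?_
      have : 0 ≤ Wm x R y := by unfold Wm; positivity
      exact Real.rpow_nonneg this _
    · exact ((Wm_measurable k x R).pow_const γ).aestronglyMeasurable
  rw [hI, hI]
  congr 1
  apply le_antisymm (hle α)
  have := hle (k - α)
  rwa [sub_sub_cancel] at this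

lemma Wm_pair (w k γ : ℝ) (hw : 0 < w) : w ^ γ + w ^ (k - γ) =
    2 * w ^ (k / 2) * Real.cosh ((γ - k / 2) * Real.log w) := by
  rw [Real.rpow_def_of_pos hw, Real.rpow_def_of_pos hw, Real.rpow_def_of_pos hw, Real.cosh_eq]
  have h1 : Real.exp (Real.log w * γ) =
      Real.exp (Real.log w * (k / 2)) * Real.exp ((γ - k / 2) * Real.log w) := by
    rw [← Real.exp_add]; congr 1; ring
  have h2 : Real.exp (Real.log w * (k - γ)) =
      Real.exp (Real.log w * (k / 2)) * Real.exp (-((γ - k / 2) * Real.log w)) := by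
    rw [← Real.exp_add]; congr 1; ring
  rw [h1, h2]; ring

lemma Wm_strict (k : ℕ) (x : EuclideanSpace ℝ (Fin (k + 1))) (R : ℝ) (hR : 0 < R)
    (hx0 : 0 < ‖x‖) (hx : ‖x‖ ≠ R) (α β : ℝ) (hab : |α - k / 2| < |β - k / 2|) :
    ∫ y in Metric.sphere 0 R, Wm x R y ^ α ∂μH[k] <
      ∫ y in Metric.sphere 0 R, Wm x R y ^ β ∂μH[k] := by
  have hS : MeasurableSet (Metric.sphere (0 : EuclideanSpace ℝ (Fin (k + 1))) R) :=
    Metric.isClosed_sphere.measurableSet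
  have hi := Wm_int k x R hR hx
  let g : EuclideanSpace ℝ (Fin (k + 1)) → ℝ := fun y =>
    (Wm x R y ^ β + Wm x R y ^ ((k : ℝ) - β)) - (Wm x R y ^ α + Wm x R y ^ ((k : ℝ) - α))
  have hgi : IntegrableOn g (Metric.sphere 0 R) μH[k] :=
    ((hi β).add (hi _)).sub ((hi α).add (hi _))
  have hg : ∫ y in Metric.sphere 0 R, g y ∂μH[k] =
      2 * (∫ y in Metric.sphere 0 R, Wm x R y ^ β ∂μH[k]) -
      2 * ∫ y in Metric.sphere 0 R, Wm x R y ^ α ∂μH[k] := by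
    have e1 := integral_sub ((hi β).add (hi (k - β))) ((hi α).add (hi (k - α)))
    have e2 := integral_add (hi β) (hi (k - β))
    have e3 := integral_add (hi α) (hi (k - α))
    rw [← Wm_symm k x R hR hx] at e2 e3
    simp only [Pi.add_apply] at e1
    change ∫ y in Metric.sphere 0 R, (Wm x R y ^ β + Wm x R y ^ ((k : ℝ) - β)) -
      (Wm x R y ^ α + Wm x R y ^ ((k : ℝ) - α)) ∂μH[k] = _
    rw [e1, e2, e3]; ring
  have hgw : ∀ y ∈ Metric.sphere (0 : EuclideanSpace ℝ (Fin (k + 1))) R,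
      0 ≤ g y ∧ (Wm x R y ≠ 1 → 0 < g y) := by
    intro y hy
    have hw := Wm_pos x R hR hx y (by simpa using hy)
    have hp : 0 < 2 * Wm x R y ^ ((k : ℝ) / 2) := by positivity
    simp only [g]
    rw [Wm_pair _ _ _ hw, Wm_pair _ _ _ hw, ← mul_sub]
    constructor
    · apply mul_nonneg hp.le
      rw [sub_nonneg, Real.cosh_le_cosh, abs_mul, abs_mul]
      gcongr
    · intro h1
      apply mul_pos hp
      rw [sub_pos, Real.cosh_lt_cosh, abs_mul, abs_mul]
      have : 0 < |Real.log (Wm x R y)| := abs_pos.2 (Real.log_ne_zero_of_pos_of_ne_one hw h1)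
      gcongr
  have hpos : 0 < ∫ y in Metric.sphere 0 R, g y ∂μH[k] := by
    rw [setIntegral_pos_iff_support_of_nonneg_ae
      ((ae_restrict_iff' hS).2 (ae_of_all _ fun y hy => (hgw y hy).1)) hgi]
    obtain ⟨p, hp, hp1⟩ := exists_Wm_ne x R hR hx0 hx
    have hpx : x - p ≠ 0 := by
      have := sub_ne x R hx p hp
      exact sub_ne_zero.2 (sub_ne_zero.1 this).symm
    have hU : {y | Wm x R y ≠ 1} ∈ nhds p := by
      have : ContinuousAt (Wm x R) p := by
        unfold Wm
        refine ContinuousAt.div continuousAt_const (by fun_prop) ?_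
        have := norm_pos_iff.2 hpx
        positivity
      exact this.eventually_ne hp1
    refine (sphere_inter_pos k R hR p hp _ hU).trans_le (measure_mono ?_)
    rintro y ⟨hy, hy1⟩
    exact ⟨((hgw y hy).2 hy1).ne', hy⟩
  linarith

/-- Main Theorem, Statement (B): for real `α, β`, equality of the integrals
`∫_{S^k(R)} ω^α = ∫_{S^k(R)} ω^β` implies `α + β = k` or `α = β`. -/
theorem main_theorem_statement_B
    (k : ℕ) (hk : 1 ≤ k) (R : ℝ) (hR : 0 < R)
    (x : EuclideanSpace ℝ (Fin (k + 1))) (hx0 : 0 < ‖x‖) (hx : ‖x‖ ≠ R)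
    (α β : ℝ)
    (h : ∫ y in Metric.sphere (0 : EuclideanSpace ℝ (Fin (k + 1))) R,
          (|‖x‖ ^ 2 - ‖y‖ ^ 2| / ‖x - y‖ ^ 2) ^ α ∂μH[k]
        = ∫ y in Metric.sphere (0 : EuclideanSpace ℝ (Fin (k + 1))) R,
          (|‖x‖ ^ 2 - ‖y‖ ^ 2| / ‖x - y‖ ^ 2) ^ β ∂μH[k]) :
    α + β = k ∨ α = β := by
  have hI : ∀ γ : ℝ, ∫ y in Metric.sphere (0 : EuclideanSpace ℝ (Fin (k + 1))) R,
      (|‖x‖ ^ 2 - ‖y‖ ^ 2| / ‖x - y‖ ^ 2) ^ γ ∂μH[k] =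
      ∫ y in Metric.sphere 0 R, Wm x R y ^ γ ∂μH[k] := by
    intro γ
    refine setIntegral_congr_fun Metric.isClosed_sphere.measurableSet fun y hy => ?_
    have hy' : ‖y‖ = R := by simpa using hy
    simp only [Wm, hy']
  rw [hI, hI] at h
  rcases lt_trichotomy |α - k / 2| |β - k / 2| with hl | he | hl
  · exact absurd h (Wm_strict k x R hR hx0 hx α β hl).ne
  · rcases abs_eq_abs.1 he with h1 | h1
    · right; linarith
    · left; linarith
  · exact absurd h (Wm_strict k x R hR hx0 hx β α hl).ne'
end

section
/- (Main Theorem, Statement (C).) Let k ≥ 1, R > 0, and x ∈ E with ‖x‖ ≠ R. Then for every β ∈ ℂ, the set { α ∈ ℂ : ∫_{y ∈ S^k(R)} ω(x,y)^α dμH[k](y) = ∫_{y ∈ S^k(R)} ω(x,y)^β dμH[k](y) } is infinite. -/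
open MeasureTheory

/-- Exponential growth. -/
def ExpGrowth (F : ℂ → ℂ) : Prop := ∃ C M : ℝ, 0 < C ∧ 0 < M ∧ ∀ z, ‖F z‖ ≤ C * Real.exp (M * ‖z‖)

/-- Subexponential growth. -/
def SubExp (Q : ℂ → ℂ) : Prop := ∀ ε : ℝ, 0 < ε → ∃ C : ℝ, 0 < C ∧ ∀ z, ‖Q z‖ ≤ C * Real.exp (ε * ‖z‖)

lemma SubExp.mul {Q₁ Q₂ : ℂ → ℂ} (h₁ : SubExp Q₁) (h₂ : SubExp Q₂) :
    SubExp (fun z => Q₁ z * Q₂ z) := by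
  intro ε hε
  obtain ⟨C, hC, h⟩ := h₁ (ε / 2) (by positivity)
  obtain ⟨D, hD, h'⟩ := h₂ (ε / 2) (by positivity)
  refine ⟨C * D, by positivity, fun z => ?_⟩
  have : Real.exp (ε * ‖z‖) = Real.exp (ε / 2 * ‖z‖) * Real.exp (ε / 2 * ‖z‖) := by
    rw [← Real.exp_add]; congr 1; ring
  rw [norm_mul, this]
  calc ‖Q₁ z‖ * ‖Q₂ z‖ ≤ (C * Real.exp (ε / 2 * ‖z‖)) * (D * Real.exp (ε / 2 * ‖z‖)) := by
        gcongr
        · exact h z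
        · exact h' z
    _ = _ := by ring

lemma subExp_one : SubExp (fun _ => 1) := by
  intro ε hε
  refine ⟨1, one_pos, fun z => ?_⟩
  simp only [norm_one, one_mul]
  exact Real.one_le_exp (by positivity)

lemma subExp_sub (a : ℂ) : SubExp (fun z => z - a) := by
  intro ε hε
  refine ⟨1 / ε + ‖a‖, by positivity, fun z => ?_⟩
  have h1 : ε * ‖z‖ ≤ Real.exp (ε * ‖z‖) := by
    linarith [Real.add_one_le_exp (ε * ‖z‖)]
  have h2 : 1 ≤ Real.exp (ε * ‖z‖) := Real.one_le_exp (by positivity)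
  calc ‖z - a‖ ≤ ‖z‖ + ‖a‖ := norm_sub_le _ _
    _ = 1 / ε * (ε * ‖z‖) + ‖a‖ * 1 := by field_simp
    _ ≤ 1 / ε * Real.exp (ε * ‖z‖) + ‖a‖ * Real.exp (ε * ‖z‖) := by gcongr
    _ = _ := by ring

lemma subExp_pow (a : ℂ) (n : ℕ) : SubExp (fun z => (z - a) ^ n) := by
  induction n with
  | zero => simpa using subExp_one
  | succ n ih => simpa only [pow_succ] using ih.mul (subExp_sub a)

/-- Divide out one zero. -/
lemma divide_zero {F : ℂ → ℂ} (hF : Differentiable ℂ F) (hg : ExpGrowth F)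
    (hfin : {z | F z = 0}.Finite) (a : ℂ) (ha : F a = 0) :
    ∃ (n : ℕ) (G : ℂ → ℂ), Differentiable ℂ G ∧ ExpGrowth G ∧
      {z | G z = 0} = {z | F z = 0} \ {a} ∧ ∀ z, F z = (z - a) ^ n * G z := by
  have hA : AnalyticAt ℂ F a := hF.analyticAt a
  have hne : analyticOrderAt F a ≠ ⊤ := by
    rw [Ne, analyticOrderAt_eq_top]
    intro h
    have : {z | F z = 0} ∈ nhds a := h
    exact infinite_of_mem_nhds a this hfin
  obtain ⟨g, hgA, hga, hev⟩ := hA.analyticOrderAt_ne_top.1 hne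
  set n := analyticOrderNatAt F a
  have hn : n ≠ 0 := by
    intro h0
    have := hev.self_of_nhds
    simp [h0, ha] at this
    exact hga this.symm
  classical
  let G : ℂ → ℂ := fun z => if z = a then g a else F z / (z - a) ^ n
  have hGa : G a = g a := by simp [G]
  have hGne : ∀ z, z ≠ a → G z = F z / (z - a) ^ n := fun z hz => by simp [G, hz]
  have hFG : ∀ z, F z = (z - a) ^ n * G z := by
    intro z
    by_cases hz : z = a
    · subst hz; simp [ha, hn]
    · rw [hGne z hz]
      have := pow_ne_zero n (sub_ne_zero.2 hz)
      field_simp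
  have hGd : Differentiable ℂ G := by
    intro z
    by_cases hz : z = a
    · subst hz
      have : G =ᶠ[nhds z] g := by
        filter_upwards [hev] with w hw
        by_cases hwz : w = z
        · rw [hwz, hGa]
        · rw [hGne w hwz, hw]
          have := pow_ne_zero n (sub_ne_zero.2 hwz)
          simp only [smul_eq_mul]
          field_simp
      exact hgA.differentiableAt.congr_of_eventuallyEq this
    · have : G =ᶠ[nhds z] fun z => F z / (z - a) ^ n := by
        filter_upwards [isOpen_ne.mem_nhds hz] with w hw using hGne w hw
      refine DifferentiableAt.congr_of_eventuallyEq ?_ this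
      exact (hF z).div (by fun_prop) (pow_ne_zero n (sub_ne_zero.2 hz))
  refine ⟨n, G, hGd, ?_, ?_, hFG⟩
  · obtain ⟨C, M, hC, hM, h⟩ := hg
    obtain ⟨D, hD⟩ := (isCompact_closedBall a 1).exists_bound_of_continuousOn
      hGd.continuous.continuousOn
    refine ⟨max C D, M, by positivity, hM, fun z => ?_⟩
    have h2 : 1 ≤ Real.exp (M * ‖z‖) := Real.one_le_exp (by positivity)
    by_cases hz : z ∈ Metric.closedBall a 1
    · calc ‖G z‖ ≤ D := hD z hz
        _ ≤ max C D * 1 := by rw [mul_one]; exact le_max_right _ _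
        _ ≤ _ := by gcongr
    · have h1 : 1 ≤ ‖z - a‖ := by
        simp [dist_eq_norm] at hz; exact hz.le
      have h3 : 1 ≤ ‖z - a‖ ^ n := one_le_pow₀ h1
      have : ‖F z‖ = ‖z - a‖ ^ n * ‖G z‖ := by rw [hFG z, norm_mul, norm_pow]
      calc ‖G z‖ ≤ ‖z - a‖ ^ n * ‖G z‖ := le_mul_of_one_le_left (norm_nonneg _) h3
        _ = ‖F z‖ := this.symm
        _ ≤ C * Real.exp (M * ‖z‖) := h z
        _ ≤ _ := by gcongr; exact le_max_left _ _
  · ext z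
    simp only [Set.mem_ofPred_eq, Set.mem_sdiff, Set.mem_singleton_iff]
    by_cases hz : z = a
    · subst hz; simp [hGa, hga]
    · rw [hFG z]; simp [hz, sub_ne_zero.2 hz]

lemma factor_zeros (n : ℕ) : ∀ F : ℂ → ℂ, Differentiable ℂ F → ExpGrowth F →
    {z | F z = 0}.Finite → {z | F z = 0}.ncard = n →
    ∃ Q G : ℂ → ℂ, SubExp Q ∧ Differentiable ℂ G ∧ ExpGrowth G ∧ (∀ z, G z ≠ 0) ∧
      ∀ z, F z = Q z * G z := by
  induction n with
  | zero =>
    intro F hF hg hfin hc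
    rw [Set.ncard_eq_zero hfin] at hc
    refine ⟨fun _ => 1, F, subExp_one, hF, hg, fun z hz => ?_, by simp⟩
    have : z ∈ {z | F z = 0} := hz
    simp [hc] at this
  | succ n ih =>
    intro F hF hg hfin hc
    obtain ⟨a, ha⟩ : {z | F z = 0}.Nonempty := by
      rw [← Set.ncard_pos hfin]; omega
    obtain ⟨m, G, hG, hGg, hGz, hFG⟩ := divide_zero hF hg hfin a ha
    obtain ⟨Q, H, hQ, hH, hHg, hH0, hGH⟩ := ih G hG hGg (by rw [hGz]; exact hfin.sdiff)
      (by rw [hGz, Set.ncard_sdiff_singleton_of_mem ha]; omega)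
    refine ⟨fun z => (z - a) ^ m * Q z, H, (subExp_pow a m).mul hQ, hH, hHg, hH0, fun z => ?_⟩
    rw [hFG, hGH]; ring

lemma exists_log {G : ℂ → ℂ} (hG : Differentiable ℂ G) (h0 : ∀ z, G z ≠ 0) :
    ∃ h : ℂ → ℂ, Differentiable ℂ h ∧ ∀ z, G z = Complex.exp (h z) := by
  have hd : Differentiable ℂ (fun z => deriv G z / G z) :=
    hG.deriv.div hG h0
  obtain ⟨h, hh0, hh⟩ := hd.isExactOn_univ.with_val_at 0 (Complex.log (G 0))
  have hh' : ∀ z, HasDerivAt h (deriv G z / G z) z := fun z => hh z (Set.mem_univ z)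
  have hhd : Differentiable ℂ h := fun z => (hh' z).differentiableAt
  refine ⟨h, hhd, ?_⟩
  have key : ∀ z, HasDerivAt (fun z => G z * Complex.exp (-h z)) 0 z := by
    intro z
    convert! (hG z).hasDerivAt.mul (hh' z).neg.cexp using 1
    have := h0 z
    field_simp
    ring
  intro z
  have := is_const_of_deriv_eq_zero (fun z => (key z).differentiableAt) (fun z => (key z).deriv) z 0
  simp only [hh0, Complex.exp_neg, Complex.exp_log (h0 0)] at this
  rw [mul_inv_cancel₀ (h0 0)] at this
  have h2 := Complex.exp_ne_zero (h z)
  field_simp at this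
  exact this

lemma linear_of_growth {h : ℂ → ℂ} (hd : Differentiable ℂ h) {A M : ℝ}
    (hA : 0 < A) (hM : 0 < M) (hre : ∀ z, (h z).re ≤ A + M * ‖z‖) :
    ∃ a b : ℂ, ∀ z, h z = a * z + b := by
  -- linear bound on the norm
  obtain ⟨B, K, hB, hK, hbd⟩ : ∃ B K : ℝ, 0 < B ∧ 0 < K ∧ ∀ z, ‖h z‖ ≤ B + K * ‖z‖ := by
    refine ⟨2 * A + 4 * M + 3 * ‖h 0‖, 4 * M, by positivity, by positivity, fun z => ?_⟩
    set r := ‖z‖ + 1 with hr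
    have hz := norm_nonneg z
    have := Complex.borelCaratheodory (f := h) (z := z) (M := A + M * (2 * r)) (R := 2 * r)
      (by positivity) hd.differentiableOn ?_ (by positivity) (by simp; linarith)
    · refine this.trans ?_
      have h1 : 2 * (A + M * (2 * r)) * ‖z‖ / (2 * r - ‖z‖) ≤ 2 * (A + M * (2 * r)) := by
        rw [div_le_iff₀ (by linarith)]
        gcongr
        linarith
      have h2 : ‖h 0‖ * (2 * r + ‖z‖) / (2 * r - ‖z‖) ≤ 3 * ‖h 0‖ := by
        rw [div_le_iff₀ (by linarith)]
        nlinarith [norm_nonneg (h 0)]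
      have h3 : 2 * (A + M * (2 * r)) = 2 * A + 4 * M + 4 * M * ‖z‖ := by rw [hr]; ring
      linarith
    · intro w hw
      simp at hw
      refine (hre w).trans ?_
      gcongr
  have hdd : ∀ c, deriv (deriv h) c = 0 := by
    intro c
    have hb : ∀ r : ℝ, 0 < r → ‖deriv (deriv h) c‖ ≤ 2 * (B + K * (‖c‖ + r)) / r ^ 2 := by
      intro r hr
      have := Complex.norm_iteratedDeriv_le_of_forall_mem_sphere_norm_le (f := h) (c := c) (R := r)
        (C := B + K * (‖c‖ + r)) 2 hr hd.diffContOnCl ?_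
      · simpa [iteratedDeriv_succ, iteratedDeriv_zero] using this
      · intro z hz
        refine (hbd z).trans ?_
        gcongr
        have : ‖z - c‖ = r := by simpa [dist_eq_norm] using hz
        calc ‖z‖ = ‖c + (z - c)‖ := by congr 1; ring
          _ ≤ _ := by rw [← this]; exact norm_add_le _ _
    by_contra hne
    have hp : 0 < ‖deriv (deriv h) c‖ := norm_pos_iff.2 hne
    set e := ‖deriv (deriv h) c‖
    set D := B + K * ‖c‖
    have hD : 0 < D := by positivity
    set r := 1 + 2 * (D + K) / e + 1 with hr
    have hr1 : 1 ≤ r := by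
      have : 0 < 2 * (D + K) / e := by positivity
      linarith
    have h1 := hb r (by linarith)
    rw [le_div_iff₀ (by positivity)] at h1
    have h2 : e * r = 2 * e + 2 * (D + K) := by rw [hr]; field_simp; ring
    have h3 : 2 * (B + K * (‖c‖ + r)) ≤ 2 * (D + K) * r := by
      simp only [D] at hD ⊢
      nlinarith
    nlinarith
  have h1 : ∀ z, deriv h z = deriv h 0 := fun z =>
    is_const_of_deriv_eq_zero hd.deriv hdd z 0
  refine ⟨deriv h 0, h 0, fun z => ?_⟩
  have key : ∀ z, HasDerivAt (fun z => h z - deriv h 0 * z) 0 z := by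
    intro z
    convert! (hd z).hasDerivAt.sub ((hasDerivAt_id z).const_mul (deriv h 0)) using 1
    rw [h1 z]; simp
  have := is_const_of_deriv_eq_zero (fun z => (key z).differentiableAt) (fun z => (key z).deriv) z 0
  simp at this
  linear_combination this

lemma expo_contra {m δ c D : ℝ} (hm : 0 < m) (hδ : 0 < δ)
    (h : ∀ t : ℝ, 0 ≤ t → m * Real.exp (δ * t) ≤ c + D * Real.exp (δ / 2 * t)) : False := by
  set u := 1 + (|c| + |D|) / m with hu
  have hpos : 0 ≤ (|c| + |D|) / m := by positivity
  have hu1 : 1 ≤ u := by linarith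
  have := h (2 / δ * Real.log u) (mul_nonneg (by positivity) (Real.log_nonneg hu1))
  have e1 : Real.exp (δ / 2 * (2 / δ * Real.log u)) = u := by
    rw [show δ / 2 * (2 / δ * Real.log u) = Real.log u by field_simp, Real.exp_log (by linarith)]
  have e2 : Real.exp (δ * (2 / δ * Real.log u)) = u * u := by
    rw [show δ * (2 / δ * Real.log u) = Real.log u + Real.log u by field_simp; ring, Real.exp_add,
      Real.exp_log (by linarith)]
  rw [e1, e2] at this
  have h2 : m * u = m + (|c| + |D|) := by rw [hu]; field_simp
  have h3 := le_abs_self c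
  have h4 := le_abs_self D
  have h5 := abs_nonneg c
  nlinarith

/-- Main complex analytic statement. -/
lemma infinite_of_growth {f : ℂ → ℂ} (hf : Differentiable ℂ f) (hg : ExpGrowth f) {m δ : ℝ}
    (hm : 0 < m) (hδ : 0 < δ)
    (hlow : ∀ t : ℝ, m * Real.exp (δ * |t|) ≤ ‖f t‖) (c : ℂ) : {z | f z = c}.Infinite := by
  intro hfin
  have hset : {z | f z = c} = {z | f z - c = 0} := by ext z; simp [sub_eq_zero]
  rw [hset] at hfin
  have hg' : ExpGrowth (fun z => f z - c) := by
    obtain ⟨C, M, hC, hM, h⟩ := hg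
    refine ⟨C + ‖c‖, M, by positivity, hM, fun z => ?_⟩
    have h2 : 1 ≤ Real.exp (M * ‖z‖) := Real.one_le_exp (by positivity)
    calc ‖f z - c‖ ≤ ‖f z‖ + ‖c‖ * 1 := by rw [mul_one]; exact norm_sub_le _ _
      _ ≤ C * Real.exp (M * ‖z‖) + ‖c‖ * Real.exp (M * ‖z‖) := by gcongr; exact h z
      _ = _ := by ring
  obtain ⟨Q, G, hQ, hGd, ⟨C, M, hC, hM, hGg⟩, hG0, hFG⟩ :=
    factor_zeros _ _ (hf.sub_const c) hg' hfin rfl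
  obtain ⟨h, hhd, hh⟩ := exists_log hGd hG0
  obtain ⟨a, b, hab⟩ := linear_of_growth hhd (A := |Real.log C| + 1) (M := M) (by positivity) hM
    (by
      intro z
      have h1 := hGg z
      rw [hh, Complex.norm_exp, ← Real.exp_log hC, ← Real.exp_add, Real.exp_le_exp] at h1
      linarith [le_abs_self (Real.log C)])
  obtain ⟨D, hD, hQD⟩ := hQ (δ / 2) (by positivity)
  -- bound on a half line
  have main : ∀ t : ℝ, a.re * t ≤ 0 →
      m * Real.exp (δ * |t|) ≤ ‖c‖ + D * Real.exp b.re * Real.exp (δ / 2 * |t|) := by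
    intro t ht
    have h1 : ‖f t‖ ≤ ‖c‖ + ‖Q t‖ * ‖G t‖ := by
      rw [← norm_mul, ← hFG]
      calc ‖f t‖ = ‖c + (f t - c)‖ := by congr 1; ring
        _ ≤ _ := norm_add_le _ _
    have h2 : ‖G t‖ ≤ Real.exp b.re := by
      rw [hh, hab, Complex.norm_exp, Real.exp_le_exp]
      simp; exact ht
    have h3 := hQD t
    rw [Complex.norm_real, Real.norm_eq_abs] at h3
    calc _ ≤ _ := hlow t
      _ ≤ _ := h1
      _ ≤ ‖c‖ + (D * Real.exp (δ / 2 * |t|)) * Real.exp b.re := by gcongr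
      _ = _ := by ring
  rcases le_total a.re 0 with ha | ha
  · refine expo_contra (c := ‖c‖) (D := D * Real.exp b.re) hm hδ fun t ht => ?_
    have := main t (mul_nonpos_of_nonpos_of_nonneg ha ht)
    rwa [abs_of_nonneg ht] at this
  · refine expo_contra (c := ‖c‖) (D := D * Real.exp b.re) hm hδ fun t ht => ?_
    have := main (-t) (mul_nonpos_of_nonneg_of_nonpos ha (by linarith))
    rwa [abs_neg, abs_of_nonneg ht] at this

open ProbabilityTheory in
lemma mgf_infinite {Ω : Type*} [MeasurableSpace Ω] (μ : Measure Ω) [IsFiniteMeasure μ]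
    {X : Ω → ℝ} (hX : Measurable X) {L δ : ℝ} (hL : ∀ᵐ y ∂μ, |X y| ≤ L) (hδ : 0 < δ)
    (h1 : μ {y | δ ≤ X y} ≠ 0) (h2 : μ {y | X y ≤ -δ} ≠ 0) (c : ℂ) :
    {z : ℂ | ∫ y, Complex.exp (z * X y) ∂μ = c}.Infinite := by
  have hL0 : 0 ≤ L ∨ μ = 0 := by
    by_cases hμ : μ = 0
    · exact Or.inr hμ
    · left
      have : (ae μ).NeBot := ae_neBot.2 hμ
      obtain ⟨y, hy⟩ := hL.exists
      exact (abs_nonneg _).trans hy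
  have hL0 : 0 ≤ L := by
    rcases hL0 with h | h
    · exact h
    · simp [h] at h1
  have hbd : ∀ t : ℝ, ∀ᵐ y ∂μ, ‖Real.exp (t * X y)‖ ≤ Real.exp (|t| * L) := by
    intro t
    filter_upwards [hL] with y hy
    rw [Real.norm_eq_abs, Real.abs_exp, Real.exp_le_exp]
    calc t * X y ≤ |t * X y| := le_abs_self _
      _ = |t| * |X y| := abs_mul _ _
      _ ≤ _ := by gcongr
  have hint : ∀ t : ℝ, Integrable (fun y => Real.exp (t * X y)) μ := fun t =>
    Integrable.of_bound (by fun_prop) _ (hbd t)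
  have hset : integrableExpSet X μ = Set.univ := by
    ext t; simpa [integrableExpSet] using hint t
  have hdiff : Differentiable ℂ (complexMGF X μ) := fun z =>
    (hasDerivAt_complexMGF (by simp [hset])).differentiableAt
  have hgr : ExpGrowth (complexMGF X μ) := by
    refine ⟨μ.real Set.univ + 1, L + 1, by positivity, by positivity, fun z => ?_⟩
    have a1 : mgf X μ z.re ≤ μ.real Set.univ * Real.exp (|z.re| * L) := by
      have := norm_integral_le_of_norm_le_const (hbd z.re)
      rw [mul_comm]
      exact (le_abs_self _).trans this
    calc _ ≤ mgf X μ z.re := norm_complexMGF_le_mgf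
      _ ≤ _ := a1
      _ = μ.real Set.univ * Real.exp (L * |z.re|) := by rw [mul_comm L]
      _ ≤ _ := by
        gcongr
        · linarith
        · linarith
        · exact Complex.abs_re_le_norm z
  have p1 : 0 < μ.real {y | δ ≤ X y} := by
    rw [measureReal_def]; exact ENNReal.toReal_pos h1 (measure_ne_top _ _)
  have p2 : 0 < μ.real {y | X y ≤ -δ} := by
    rw [measureReal_def]; exact ENNReal.toReal_pos h2 (measure_ne_top _ _)
  refine infinite_of_growth hdiff hgr (m := min (μ.real {y | δ ≤ X y}) (μ.real {y | X y ≤ -δ}))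
    (lt_min p1 p2) hδ (fun t => ?_) c
  have hn : mgf X μ t ≤ ‖complexMGF X μ t‖ := by
    rw [complexMGF_ofReal, Complex.norm_real]; exact le_abs_self _
  refine le_trans ?_ hn
  rcases le_total 0 t with ht | ht
  · have := measure_ge_le_exp_mul_mgf δ ht (hint t)
    rw [abs_of_nonneg ht]
    calc _ ≤ (Real.exp (-t * δ) * mgf X μ t) * Real.exp (δ * t) := by
          gcongr; exact (min_le_left _ _).trans this
      _ = mgf X μ t * (Real.exp (-t * δ) * Real.exp (δ * t)) := by ring
      _ = _ := by rw [← Real.exp_add, show -t * δ + δ * t = 0 by ring]; simp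
  · have := measure_le_le_exp_mul_mgf (-δ) ht (hint t)
    rw [abs_of_nonpos ht]
    calc _ ≤ (Real.exp (-t * -δ) * mgf X μ t) * Real.exp (δ * -t) := by
          gcongr; exact (min_le_right _ _).trans this
      _ = mgf X μ t * (Real.exp (-t * -δ) * Real.exp (δ * -t)) := by ring
      _ = _ := by rw [← Real.exp_add, show -t * -δ + δ * -t = 0 by ring]; simp

lemma sphere_null {n : ℕ} {d R : ℝ} {U : Set (EuclideanSpace ℝ (Fin n))} (hU : IsOpen U)
    {y₀ : EuclideanSpace ℝ (Fin n)} (hy : y₀ ∈ U) (hyS : ‖y₀‖ = R)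
    (h : μH[d] (U ∩ Metric.sphere 0 R) = 0) :
    μH[d] (Metric.sphere (0 : EuclideanSpace ℝ (Fin n)) R) = 0 := by
  refine measure_null_of_locally_null _ fun y hyy => ?_
  have hyn : ‖y‖ = R := by simpa using hyy
  let φ := (Submodule.span ℝ {y - y₀})ᗮ.reflection
  have hφ : φ y = y₀ := Submodule.reflection_sub (hyn.trans hyS.symm)
  refine ⟨φ ⁻¹' U ∩ Metric.sphere 0 R, ?_, ?_⟩
  · rw [Set.inter_comm]
    refine inter_mem_nhdsWithin _ ?_
    exact (hU.preimage φ.continuous).mem_nhds (by simpa [hφ] using hy)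
  · have : φ ⁻¹' U ∩ Metric.sphere 0 R = φ.toIsometryEquiv ⁻¹' (U ∩ Metric.sphere 0 R) := by
      ext z; simp
    rw [this, IsometryEquiv.hausdorffMeasure_preimage, h]

theorem main_theorem_statement_C
    (k : ℕ) (hk : 1 ≤ k) (R : ℝ) (hR : 0 < R)
    (x : EuclideanSpace ℝ (Fin (k + 1))) (hx : ‖x‖ ≠ R) (β : ℂ) :
    {α : ℂ |
        ∫ y in Metric.sphere (0 : EuclideanSpace ℝ (Fin (k + 1))) R,
          ((|‖x‖ ^ 2 - ‖y‖ ^ 2| / ‖x - y‖ ^ 2 : ℝ) : ℂ) ^ α ∂μH[k]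
        = ∫ y in Metric.sphere (0 : EuclideanSpace ℝ (Fin (k + 1))) R,
          ((|‖x‖ ^ 2 - ‖y‖ ^ 2| / ‖x - y‖ ^ 2 : ℝ) : ℂ) ^ β ∂μH[k]}.Infinite := by
  set S := Metric.sphere (0 : EuclideanSpace ℝ (Fin (k + 1))) R with hS
  set w : EuclideanSpace ℝ (Fin (k + 1)) → ℝ := fun y => |‖x‖ ^ 2 - ‖y‖ ^ 2| / ‖x - y‖ ^ 2 with hw
  have hSn : ∀ y ∈ S, ‖y‖ = R := fun y hy => by simpa [hS] using hy
  have hSm : MeasurableSet S := Metric.isClosed_sphere.measurableSet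
  have hsub : ∀ y ∈ S, 0 < ‖x - y‖ := by
    intro y hy
    rw [norm_pos_iff, sub_ne_zero]
    rintro rfl
    exact hx (hSn _ hy)
  have hnum : 0 < |‖x‖ ^ 2 - R ^ 2| := by
    rw [abs_pos, sub_ne_zero]
    intro h
    exact hx ((pow_left_inj₀ (norm_nonneg x) hR.le two_ne_zero).1 h)
  have hwS : ∀ y ∈ S, w y = |‖x‖ ^ 2 - R ^ 2| / ‖x - y‖ ^ 2 := fun y hy => by
    simp only [hw, hSn y hy]
  have hpos : ∀ y ∈ S, 0 < w y := by
    intro y hy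
    have := hsub y hy
    rw [hwS y hy]
    positivity
  set X : EuclideanSpace ℝ (Fin (k + 1)) → ℝ := fun y => Real.log (w y) with hXdef
  have hwm : Measurable w := by fun_prop
  have hXm : Measurable X := Real.measurable_log.comp hwm
  have hwc : ContinuousOn w S := by
    refine ContinuousOn.div (by fun_prop) (by fun_prop) fun y hy => ?_
    have := hsub y hy
    positivity
  have hXc : ContinuousOn X S := hwc.log fun y hy => (hpos y hy).ne'
  obtain ⟨L, hL⟩ := (isCompact_sphere (0 : EuclideanSpace ℝ (Fin (k + 1))) R).exists_bound_of_continuousOn hXc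
  have hLae : ∀ᵐ y ∂(μH[k].restrict S), |X y| ≤ L := by
    rw [ae_restrict_iff' hSm]
    exact ae_of_all _ fun y hy => hL y hy
  have hI : ∀ α : ℂ, ∫ y in S, ((w y : ℝ) : ℂ) ^ α ∂μH[k]
      = ∫ y in S, Complex.exp (α * X y) ∂μH[k] := by
    intro α
    refine setIntegral_congr_fun hSm fun y hy => ?_
    have := hpos y hy
    rw [Complex.cpow_def_of_ne_zero (by exact_mod_cast this.ne'), ← Complex.ofReal_log this.le,
      mul_comm]
  change {α : ℂ | ∫ y in S, ((w y : ℝ) : ℂ) ^ α ∂μH[k] = ∫ y in S, ((w y : ℝ) : ℂ) ^ β ∂μH[k]}.Infinite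
  simp only [hI]
  -- trivial cases
  have triv : (∀ α : ℂ, ∫ y in S, Complex.exp (α * X y) ∂μH[k]
      = ∫ y in S, Complex.exp (β * X y) ∂μH[k]) →
      {α : ℂ | ∫ y in S, Complex.exp (α * X y) ∂μH[k]
      = ∫ y in S, Complex.exp (β * X y) ∂μH[k]}.Infinite := by
    intro h
    have : {α : ℂ | ∫ y in S, Complex.exp (α * X y) ∂μH[k]
      = ∫ y in S, Complex.exp (β * X y) ∂μH[k]} = Set.univ := Set.eq_univ_of_forall h
    rw [this]
    exact Set.infinite_univ
  by_cases hx0 : x = 0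
  · apply triv
    intro α
    refine setIntegral_congr_fun hSm fun y hy => ?_
    have : X y = 0 := by
      simp [hXdef, hw, hx0]
    simp [this]
  by_cases h0 : (μH[k] : Measure (EuclideanSpace ℝ (Fin (k + 1)))) S = 0
  · apply triv
    intro α
    rw [Measure.restrict_eq_zero.2 h0]
    simp
  by_cases htop : (μH[k] : Measure (EuclideanSpace ℝ (Fin (k + 1)))) S = ⊤
  · have hz : ∀ α : ℂ, ∫ y in S, Complex.exp (α * X y) ∂μH[k] = 0 := by
      intro α
      refine integral_undef fun hint => ?_
      have h1 : Integrable (fun _ : EuclideanSpace ℝ (Fin (k + 1)) => Real.exp (-(|α.re| * L)))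
          (μH[k].restrict S) := by
        refine hint.mono (by fun_prop) ?_
        filter_upwards [hLae] with y hy
        rw [Complex.norm_exp, Real.norm_eq_abs, Real.abs_exp, Real.exp_le_exp]
        have : (α * (X y : ℂ)).re = α.re * X y := by simp
        rw [this]
        have h2 : |α.re * X y| ≤ |α.re| * L := by
          rw [abs_mul]; gcongr
        linarith [neg_abs_le (α.re * X y)]
      rw [integrable_const_iff] at h1
      rcases h1 with h1 | h1
      · exact (Real.exp_pos _).ne' h1
      · have := h1.measure_univ_lt_top
        simp [htop] at this
    exact triv fun α => by rw [hz, hz]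
  have : IsFiniteMeasure (μH[k].restrict S) := ⟨by
    rw [Measure.restrict_apply_univ]; exact lt_top_iff_ne_top.2 htop⟩
  -- the main case
  have hr : 0 < ‖x‖ := norm_pos_iff.2 hx0
  set ρ := (‖x‖ + R) / |‖x‖ - R| with hρ
  have hd : 0 < |‖x‖ - R| := abs_pos.2 (sub_ne_zero.2 hx)
  have hρ1 : 1 < ρ := by
    rw [hρ, one_lt_div hd, abs_lt]
    constructor <;> linarith
  have hlog : 0 < Real.log ρ := Real.log_pos hρ1
  have hfac : |‖x‖ ^ 2 - R ^ 2| = (‖x‖ + R) * |‖x‖ - R| := by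
    rw [show ‖x‖ ^ 2 - R ^ 2 = (‖x‖ + R) * (‖x‖ - R) by ring, abs_mul,
      abs_of_pos (show 0 < ‖x‖ + R by linarith)]
  -- neighbourhoods
  have cap : ∀ (y₀ : EuclideanSpace ℝ (Fin (k + 1))), y₀ ∈ S → ∀ V : Set ℝ, IsOpen V → X y₀ ∈ V →
      (μH[k].restrict S) (X ⁻¹' V) ≠ 0 := by
    intro y₀ hy₀ V hV hmem hzero
    apply h0
    obtain ⟨U, hU, hUe⟩ := (continuousOn_iff'.1 hXc) V hV
    refine sphere_null hU (y₀ := y₀) ?_ (hSn _ hy₀) ?_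
    · have : y₀ ∈ X ⁻¹' V ∩ S := ⟨hmem, hy₀⟩
      rw [hUe] at this
      exact this.1
    · rw [Measure.restrict_apply (hXm hV.measurableSet), hUe] at hzero
      exact hzero
  have yS : ∀ s : ℝ, |s| = 1 → (s * (R / ‖x‖)) • x ∈ S := by
    intro s hs
    rw [hS, mem_sphere_zero_iff_norm, norm_smul, Real.norm_eq_abs, abs_mul, hs,
      abs_of_pos (by positivity)]
    field_simp
  have ydist : ∀ s : ℝ, ‖x - (s * (R / ‖x‖)) • x‖ = |‖x‖ - s * R| := by
    intro s
    have : x - (s * (R / ‖x‖)) • x = (1 - s * (R / ‖x‖)) • x := by rw [sub_smul, one_smul]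
    rw [this, norm_smul, Real.norm_eq_abs]
    nth_rewrite 2 [← abs_of_pos hr]
    rw [← abs_mul]
    congr 1
    field_simp
  have X1 : X (((1 : ℝ) * (R / ‖x‖)) • x) = Real.log ρ := by
    simp only [hXdef]
    rw [hwS _ (yS 1 (by simp)), ydist, hfac, one_mul, hρ]
    congr 1
    field_simp
  have X2 : X (((-1 : ℝ) * (R / ‖x‖)) • x) = -Real.log ρ := by
    simp only [hXdef]
    rw [hwS _ (yS (-1) (by simp)), ydist, hfac, ← Real.log_inv, hρ,
      show ‖x‖ - -1 * R = ‖x‖ + R by ring, abs_of_pos (show 0 < ‖x‖ + R by linarith)]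
    congr 1
    have : 0 < ‖x‖ + R := by linarith
    field_simp
  refine mgf_infinite (μH[k].restrict S) hXm hLae (δ := Real.log ρ / 2) (by positivity) ?_ ?_ _
  · intro hz
    refine cap _ (yS 1 (by simp)) (Set.Ioi (Real.log ρ / 2)) isOpen_Ioi ?_ (measure_mono_null ?_ hz)
    · rw [X1]; simp; linarith
    · intro y hy
      exact (show Real.log ρ / 2 < X y from hy).le
  · intro hz
    refine cap _ (yS (-1) (by simp)) (Set.Iio (-(Real.log ρ / 2))) isOpen_Iio ?_
      (measure_mono_null ?_ hz)
    · rw [X2]; simp; linarith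
    · intro y hy
      exact (show X y < -(Real.log ρ / 2) from hy).le
end

section
/- (Main Theorem, Statement (D).) Let k ≥ 1, R > 0, and x ∈ E with r = ‖x‖ satisfying 0 < r and r ≠ R. Let α, β ∈ ℂ satisfy max(|Im α|, |Im β|) ≤ (π/2) / Real.log((R + r)/|R − r|). If ∫_{y ∈ S^k(R)} ω(x,y)^α dμH[k](y) = ∫_{y ∈ S^k(R)} ω(x,y)^β dμH[k](y), then α + β = k or α = β. -/
open MeasureTheory Real
open scoped ENNReal NNReal


/-- `z * ∫_{-1}^1 e^{zs} ds = 2 sinh z`. -/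
lemma aux_sinh_int (z : ℂ) : z * ∫ s in (-1:ℝ)..1, Complex.exp (z * s) = 2 * Complex.sinh z := by
  rcases eq_or_ne z 0 with rfl | hz
  · simp
  · rw [integral_exp_mul_complex hz]
    rw [Complex.sinh]
    push_cast
    rw [mul_div_cancel₀ _ hz]
    ring_nf

lemma aux_re_int (f : ℝ → ℂ) (hf : Continuous f) :
    (∫ s in (-1:ℝ)..1, f s).re = ∫ s in (-1:ℝ)..1, (f s).re := by
  have := (Complex.reCLM).intervalIntegral_comp_comm (hf.intervalIntegrable (μ := volume) (-1) 1)
  simpa using this.symm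

lemma aux_pos (z w : ℂ) (h : |z.im| + |w.im| ≤ π / 2) :
    0 < ((∫ s in (-1:ℝ)..1, Complex.exp (z * s)) *
      (∫ s in (-1:ℝ)..1, Complex.exp (w * s))).re := by
  rw [← intervalIntegral.integral_mul_const, aux_re_int _ (by fun_prop)]
  have key : ∀ s ∈ Set.Ioo (-1:ℝ) 1, 0 < (Complex.exp (z * s) *
      (∫ s in (-1:ℝ)..1, Complex.exp (w * s))).re := by
    intro s hs
    rw [← intervalIntegral.integral_const_mul, aux_re_int _ (by fun_prop)]
    apply intervalIntegral.intervalIntegral_pos_of_pos_on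
    · exact Continuous.intervalIntegrable (by fun_prop) _ _
    · intro t ht
      rw [← Complex.exp_add, Complex.exp_re]
      have h1 : |z.im * s + w.im * t| < π / 2 := by
        have hs' : |s| < 1 := abs_lt.2 hs
        have ht' : |t| < 1 := abs_lt.2 ht
        have e : |z.im * s + w.im * t| ≤ |z.im| * |s| + |w.im| * |t| := by
          rw [← abs_mul, ← abs_mul]; exact abs_add_le _ _
        rcases eq_or_ne z.im 0 with hz | hz
        · rcases eq_or_ne w.im 0 with hw | hw
          · simp [hz, hw, Real.pi_pos]
          · have : 0 < |w.im| := abs_pos.2 hw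
            have hz' : |z.im| = 0 := by simp [hz]
            nlinarith
        · have : 0 < |z.im| := abs_pos.2 hz
          nlinarith [abs_nonneg w.im, abs_nonneg t]
      have h2 : (z * s + w * t).im = z.im * s + w.im * t := by simp
      rw [h2]
      have := abs_lt.1 h1
      exact mul_pos (Real.exp_pos _) (Real.cos_pos_of_mem_Ioo ⟨by linarith [this.1], this.2⟩)
    · norm_num
  apply intervalIntegral.intervalIntegral_pos_of_pos_on
  · exact Continuous.intervalIntegrable (by fun_prop) _ _
  · exact key
  · norm_num

lemma aux_scalar (p q : ℂ) (hp : p ≠ 0) (hq : q ≠ 0) (t : ℝ) (ht : t ≠ 0)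
    (h : (|p.im| + |q.im|) * |t| ≤ π / 2) :
    0 < (Complex.sinh (p * t) * Complex.sinh (q * t) / (p * q)).re := by
  have h0 := aux_pos (p * t) (q * t) (by
    simp only [Complex.mul_im, Complex.ofReal_re, Complex.ofReal_im, mul_zero, zero_add, abs_mul]
    linarith)
  have h1 := aux_sinh_int (p * t)
  have h2 := aux_sinh_int (q * t)
  set A := ∫ s in (-1:ℝ)..1, Complex.exp (p * t * s)
  set B := ∫ s in (-1:ℝ)..1, Complex.exp (q * t * s)
  have : Complex.sinh (p * t) * Complex.sinh (q * t) / (p * q) = ((t ^ 2 / 4 : ℝ) : ℂ) * (A * B) := by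
    rw [div_eq_iff (mul_ne_zero hp hq)]
    push_cast
    linear_combination (-(Complex.sinh (q * t)) / 2) * h1 - (p * t * A / 4) * h2
  rw [this, Complex.re_ofReal_mul]
  positivity

lemma aux_wd_le {X : Type*} [MeasurableSpace X] (ρ₁ ρ₂ : Measure X) (f : X → ℝ≥0)
    (hf : Measurable f)
    (h : ∀ A, MeasurableSet A → ∀ M : ℝ≥0, (∀ y ∈ A, f y ≤ M) → ρ₂ A ≤ M * ρ₁ A) :
    ρ₂ ≤ ρ₁.withDensity (fun y => (f y : ℝ≥0∞)) := by
  have hf' : Measurable (fun y => (f y : ℝ≥0∞)) := hf.coe_nnreal_ennreal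
  rw [Measure.le_iff]
  intro A hA
  have main : ∀ t : ℝ≥0, 1 < t → ρ₂ A ≤ t * ρ₁.withDensity (fun y => (f y : ℝ≥0∞)) A := by
    intro t ht
    have ht0 : t ≠ 0 := by positivity
    rw [measure_eq_measure_preimage_add_measure_tsum_Ico_zpow ρ₂ hf' hA ht]
    rw [measure_eq_measure_preimage_add_measure_tsum_Ico_zpow (ρ₁.withDensity _) hf' hA ht]
    rw [mul_add, mul_add, ← ENNReal.tsum_mul_left]
    have e0 : ρ₂ (A ∩ (fun y => (f y : ℝ≥0∞)) ⁻¹' {0}) = 0 := by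
      have := h (A ∩ (fun y => (f y : ℝ≥0∞)) ⁻¹' {0}) (hA.inter (hf' (measurableSet_singleton _))) 0
        (by rintro y ⟨_, hy⟩; simp at hy; simp [hy])
      simpa using this
    have e1 : (A ∩ (fun y => (f y : ℝ≥0∞)) ⁻¹' {∞}) = ∅ := by ext; simp
    rw [e0, e1]
    simp only [measure_empty, zero_add, mul_zero, add_zero]
    refine le_trans ?_ le_add_self
    refine ENNReal.tsum_le_tsum fun n => ?_
    set B := A ∩ (fun y => (f y : ℝ≥0∞)) ⁻¹' Set.Ico ((t:ℝ≥0∞) ^ n) ((t:ℝ≥0∞) ^ (n + 1)) with hB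
    have hBm : MeasurableSet B := hA.inter (hf' measurableSet_Ico)
    have a1 : ρ₂ B ≤ (t ^ (n+1) : ℝ≥0) * ρ₁ B := by
      apply h B hBm
      rintro y ⟨_, hy⟩
      have : (f y : ℝ≥0∞) ≤ (t:ℝ≥0∞) ^ (n + 1) := hy.2.le
      rw [← ENNReal.coe_zpow ht0] at this
      exact_mod_cast this
    have a2 : (t ^ n : ℝ≥0) * ρ₁ B ≤ ρ₁.withDensity (fun y => (f y : ℝ≥0∞)) B := by
      rw [withDensity_apply _ hBm, ← setLIntegral_const]
      apply setLIntegral_mono hf'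
      rintro y ⟨_, hy⟩
      have := hy.1
      rwa [← ENNReal.coe_zpow ht0] at this
    calc ρ₂ B ≤ (t ^ (n+1) : ℝ≥0) * ρ₁ B := a1
      _ = t * ((t ^ n : ℝ≥0) * ρ₁ B) := by
        rw [zpow_add_one₀ ht0, ENNReal.coe_mul]; ring
      _ ≤ _ := by gcongr
  have lim : Filter.Tendsto (fun t : ℝ≥0 => (t:ℝ≥0∞) * ρ₁.withDensity (fun y => (f y : ℝ≥0∞)) A)
      (nhdsWithin 1 (Set.Ioi 1)) (nhds (((1:ℝ≥0):ℝ≥0∞) * ρ₁.withDensity (fun y => (f y : ℝ≥0∞)) A)) := by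
    apply ENNReal.Tendsto.mul_const
    · exact (ENNReal.tendsto_coe.2 Filter.tendsto_id).mono_left nhdsWithin_le_nhds
    · left; simp
  have := ge_of_tendsto lim (Filter.eventually_of_mem self_mem_nhdsWithin (fun t ht => main t ht))
  simpa using this

lemma aux_haar (k : ℕ) (n : EuclideanSpace ℝ (Fin (k + 1))) (hn : ‖n‖ = 1) :
    (μH[k] : Measure (ℝ ∙ n)ᗮ).IsAddHaarMeasure := by
  have h := isAddHaarMeasure_hausdorffMeasure (E := (ℝ ∙ n)ᗮ)
  have : Fact (Module.finrank ℝ (EuclideanSpace ℝ (Fin (k + 1))) = k + 1) := ⟨by simp⟩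
  rwa [Submodule.finrank_orthogonal_span_singleton (n := k) (by intro h; simp [h] at hn)] at h

lemma aux_proj {E : Type*} [NormedAddCommGroup E] [InnerProductSpace ℝ E] (n : E) (hn : ‖n‖ = 1)
    (y : E) : ((ℝ ∙ n)ᗮ.orthogonalProjectionOnto y : E) = y - (inner ℝ n y) • n := by
  rw [Submodule.coe_orthogonalProjectionOnto_apply, Submodule.starProjection_orthogonal_val,
    Submodule.starProjection_unit_singleton ℝ hn]

lemma aux_pyth {E : Type*} [NormedAddCommGroup E] [InnerProductSpace ℝ E] (n : E) (hn : ‖n‖ = 1)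
    (y : E) : ‖y‖ ^ 2 = (inner ℝ n y) ^ 2 + ‖(ℝ ∙ n)ᗮ.orthogonalProjectionOnto y‖ ^ 2 := by
  rw [← Submodule.norm_coe, aux_proj n hn, @norm_sub_sq ℝ]
  simp [norm_smul, hn, inner_smul_right, real_inner_comm]
  ring

lemma aux_finite (k : ℕ) (R : ℝ) (hR : 0 < R) :
    (μH[k] : Measure (EuclideanSpace ℝ (Fin (k + 1)))) (Metric.sphere 0 R) < ∞ := by
  apply (isCompact_sphere _ _).measure_lt_top_of_nhdsWithin
  intro y hy
  have hyR : ‖y‖ = R := by simpa using hy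
  set n := R⁻¹ • y with hndef
  have hn : ‖n‖ = 1 := by
    rw [hndef, norm_smul, hyR, norm_inv, Real.norm_of_nonneg hR.le, inv_mul_cancel₀ hR.ne']
  set D : Set (EuclideanSpace ℝ (Fin (k + 1))) := Metric.sphere 0 R ∩ {z | R / 2 < inner ℝ n z}
  refine ⟨D, ?_, ?_⟩
  · refine Filter.inter_mem self_mem_nhdsWithin (nhdsWithin_le_nhds ?_)
    apply (isOpen_lt continuous_const (by fun_prop)).mem_nhds
    simp only [Set.mem_ofPred_eq, hndef, inner_smul_left]
    simp [hyR]
    field_simp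
    linarith
  · have := aux_haar k n hn
    let f : D → (ℝ ∙ n)ᗮ := fun z => (ℝ ∙ n)ᗮ.orthogonalProjectionOnto z.1
    have hf : AntilipschitzWith 3 f := by
      apply AntilipschitzWith.of_le_mul_dist
      rintro ⟨z, hz1, hz2⟩ ⟨w, hw1, hw2⟩
      have hzR : ‖z‖ = R := by simpa using hz1
      have hwR : ‖w‖ = R := by simpa using hw1
      simp only [Set.mem_ofPred_eq] at hz2 hw2
      rw [Subtype.dist_eq, dist_eq_norm, dist_eq_norm]
      simp only [f, ← map_sub]
      have e1 := aux_pyth n hn z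
      have e2 := aux_pyth n hn w
      have e3 := aux_pyth n hn (z - w)
      rw [inner_sub_right] at e3
      have e4 := abs_norm_sub_norm_le ((ℝ ∙ n)ᗮ.orthogonalProjectionOnto z) ((ℝ ∙ n)ᗮ.orthogonalProjectionOnto w)
      rw [← map_sub] at e4
      rw [hzR] at e1
      rw [hwR] at e2
      set a := inner ℝ n z
      set b := inner ℝ n w
      set d := ‖(ℝ ∙ n)ᗮ.orthogonalProjectionOnto (z - w)‖
      set u := ‖(ℝ ∙ n)ᗮ.orthogonalProjectionOnto z‖
      set v := ‖(ℝ ∙ n)ᗮ.orthogonalProjectionOnto w‖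
      have hd : 0 ≤ d := norm_nonneg _
      have hu : 0 ≤ u := norm_nonneg _
      have hv : 0 ≤ v := norm_nonneg _
      have hu' : u ≤ R := by nlinarith
      have hv' : v ≤ R := by nlinarith
      have h5 : |a - b| * R ≤ 2 * R * d := by
        calc |a - b| * R ≤ |a - b| * |a + b| := by
              gcongr
              rw [abs_of_pos (by linarith)]; linarith
          _ = |u - v| * |u + v| := by
              rw [← abs_mul, ← abs_mul, ← abs_neg]; congr 1; linarith
          _ ≤ d * (2 * R) := by
              gcongr
              rw [abs_of_nonneg (by linarith)]; linarith
          _ = _ := by ring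
      have h6 : |a - b| ≤ 2 * d := by
        by_contra hc
        push Not at hc
        nlinarith
      have h7 : (a - b) ^ 2 ≤ (2 * d) ^ 2 := by
        rw [← sq_abs]; gcongr
      apply abs_le_of_sq_le_sq' _ (by positivity) |>.2
      rw [e3]
      push_cast
      nlinarith
    have h1 : (μH[k] : Measure D) Set.univ = μH[k] D := by
      rw [← isometry_subtype_coe.hausdorffMeasure_image (Or.inl (by positivity))]
      simp
    rw [← h1]
    have h2 : (Set.univ : Set D) = f ⁻¹' (Metric.closedBall 0 R) := by
      symm
      rw [Set.eq_univ_iff_forall]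
      rintro ⟨z, hz1, hz2⟩
      have hzR : ‖z‖ = R := by simpa using hz1
      have := aux_pyth n hn z
      simp only [f, Set.mem_preimage, mem_closedBall_zero_iff]
      rw [← hzR]
      apply abs_le_of_sq_le_sq' _ (by positivity) |>.2
      nlinarith [sq_nonneg (inner ℝ n z)]
    rw [h2]
    refine (hf.hausdorffMeasure_preimage_le (by positivity) _).trans_lt ?_
    apply ENNReal.mul_lt_top
    · apply ENNReal.rpow_lt_top_of_nonneg (by positivity) (by simp)
    · exact (isCompact_closedBall _ _).measure_lt_top

lemma aux_posm (k : ℕ) (R : ℝ) (hR : 0 < R) (n : EuclideanSpace ℝ (Fin (k + 1))) (hn : ‖n‖ = 1)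
    (U : Set (EuclideanSpace ℝ (Fin (k + 1)))) (hU : IsOpen U) (hRU : R • n ∈ U) :
    0 < (μH[k] : Measure (EuclideanSpace ℝ (Fin (k + 1)))) (U ∩ Metric.sphere 0 R) := by
  have := aux_haar k n hn
  let g : (ℝ ∙ n)ᗮ → EuclideanSpace ℝ (Fin (k + 1)) := fun v => v + √(R ^ 2 - ‖v‖ ^ 2) • n
  have hg : Continuous g := by fun_prop
  have hV : IsOpen (g ⁻¹' U ∩ Metric.ball 0 R) := (hU.preimage hg).inter Metric.isOpen_ball
  have hVne : (g ⁻¹' U ∩ Metric.ball 0 R).Nonempty := by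
    refine ⟨0, ?_, by simpa using hR⟩
    simp only [g, Set.mem_preimage]
    simpa [Real.sqrt_sq hR.le] using hRU
  have hpos := hV.measure_pos (μH[k] : Measure (ℝ ∙ n)ᗮ) hVne
  have hlip : LipschitzWith 1 ((ℝ ∙ n)ᗮ.orthogonalProjectionOnto) := by
    apply LipschitzWith.of_dist_le_mul
    intro a b
    rw [dist_eq_norm, dist_eq_norm, ← map_sub]
    have := aux_pyth n hn (a - b)
    rw [NNReal.coe_one, one_mul]
    apply abs_le_of_sq_le_sq' _ (by positivity) |>.2
    nlinarith [sq_nonneg (inner ℝ n (a - b))]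
  have h1 := hlip.hausdorffMeasure_image_le (d := k) (by positivity) (U ∩ Metric.sphere 0 R)
  simp only [ENNReal.coe_one, ENNReal.one_rpow, one_mul] at h1
  refine lt_of_lt_of_le hpos (le_trans (measure_mono ?_) h1)
  rintro v ⟨hv1, hv2⟩
  have hvn : inner ℝ n (v : EuclideanSpace ℝ (Fin (k + 1))) = 0 :=
    (Submodule.mem_orthogonal_singleton_iff_inner_right).1 v.2
  have hin : inner ℝ n (g v) = √(R ^ 2 - ‖v‖ ^ 2) := by
    simp [g, inner_add_right, inner_smul_right, hvn, hn]
  have hP : (ℝ ∙ n)ᗮ.orthogonalProjectionOnto (g v) = v := by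
    apply Subtype.ext
    rw [aux_proj n hn, hin]
    simp [g]
  refine ⟨g v, ⟨hv1, ?_⟩, hP⟩
  have := aux_pyth n hn (g v)
  have hvR : ‖v‖ < R := by simpa using hv2
  rw [hP, hin, Real.sq_sqrt (by nlinarith [norm_nonneg v])] at this
  rw [mem_sphere_zero_iff_norm]
  have h3 : ‖g v‖ ^ 2 = R ^ 2 := by linarith
  exact (pow_left_inj₀ (norm_nonneg _) hR.le two_ne_zero).1 h3

/-- The involution of the sphere: second intersection of the line through `x` and `y`. -/
noncomputable def auxT {E : Type*} [NormedAddCommGroup E] [InnerProductSpace ℝ E] (R : ℝ) (x y : E) : E :=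
  x + ((‖x‖ ^ 2 - R ^ 2) / ‖y - x‖ ^ 2) • (y - x)

/-- The kernel `ω` on the sphere. -/
noncomputable def auxW {E : Type*} [NormedAddCommGroup E] [InnerProductSpace ℝ E] (R : ℝ) (x y : E) : ℝ≥0 :=
  ‖‖x‖ ^ 2 - R ^ 2‖₊ / ‖y - x‖₊ ^ 2

section
variable {E : Type*} [NormedAddCommGroup E] [InnerProductSpace ℝ E]

lemma auxT_sub (R : ℝ) (x y : E) :
    auxT R x y - x = ((‖x‖ ^ 2 - R ^ 2) / ‖y - x‖ ^ 2) • (y - x) := by simp [auxT]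

lemma auxT_norm_sub_sq (R : ℝ) (x y : E) (hy : y ≠ x) :
    ‖auxT R x y - x‖ ^ 2 = (‖x‖ ^ 2 - R ^ 2) ^ 2 / ‖y - x‖ ^ 2 := by
  have : ‖y - x‖ ≠ 0 := norm_ne_zero_iff.2 (sub_ne_zero.2 hy)
  rw [auxT_sub, norm_smul, mul_pow, norm_div, div_pow, Real.norm_eq_abs, sq_abs]
  simp
  field_simp

lemma auxT_mem (R : ℝ) (hR : 0 < R) (x y : E) (hx : ‖x‖ ≠ R) (hy : ‖y‖ = R) :
    ‖auxT R x y‖ = R := by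
  have hyx : y ≠ x := by rintro rfl; exact hx hy
  have h0 : ‖y - x‖ ≠ 0 := norm_ne_zero_iff.2 (sub_ne_zero.2 hyx)
  rw [← pow_left_inj₀ (norm_nonneg _) hR.le two_ne_zero]
  have h1 := auxT_norm_sub_sq R x y hyx
  have h2 : ‖auxT R x y‖ ^ 2 = ‖x‖ ^ 2 + 2 * inner ℝ x (auxT R x y - x) + ‖auxT R x y - x‖ ^ 2 := by
    rw [← norm_add_sq_real]; simp
  have h3 : ‖y‖ ^ 2 = ‖x‖ ^ 2 + 2 * inner ℝ x (y - x) + ‖y - x‖ ^ 2 := by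
    rw [← norm_add_sq_real]; simp
  rw [h2, h1, auxT_sub, inner_smul_right]
  have h4 : inner ℝ x (y - x) = (R ^ 2 - ‖x‖ ^ 2 - ‖y - x‖ ^ 2) / 2 := by rw [← hy]; linarith
  rw [h4]
  field_simp
  ring

lemma auxT_invol (R : ℝ) (hR : 0 < R) (x y : E) (hx : ‖x‖ ≠ R) (hy : ‖y‖ = R) :
    auxT R x (auxT R x y) = y := by
  have hyx : y ≠ x := by rintro rfl; exact hx hy
  have h0 : ‖y - x‖ ≠ 0 := norm_ne_zero_iff.2 (sub_ne_zero.2 hyx)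
  have hm : ‖x‖ ^ 2 - R ^ 2 ≠ 0 := by
    rw [sub_ne_zero]
    intro h
    exact hx ((pow_left_inj₀ (norm_nonneg _) hR.le two_ne_zero).1 h)
  rw [auxT, auxT_norm_sub_sq _ _ _ hyx, auxT_sub, smul_smul]
  have : (‖x‖ ^ 2 - R ^ 2) / ((‖x‖ ^ 2 - R ^ 2) ^ 2 / ‖y - x‖ ^ 2) *
    ((‖x‖ ^ 2 - R ^ 2) / ‖y - x‖ ^ 2) = 1 := by field_simp
  rw [this]; simp

lemma auxW_coe (R : ℝ) (x y : E) : (auxW R x y : ℝ) = |‖x‖ ^ 2 - R ^ 2| / ‖y - x‖ ^ 2 := by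
  simp [auxW]

lemma auxW_pos (R : ℝ) (hR : 0 < R) (x y : E) (hx : ‖x‖ ≠ R) (hy : ‖y‖ = R) : 0 < auxW R x y := by
  have hyx : y ≠ x := by rintro rfl; exact hx hy
  have h0 : ‖y - x‖ ≠ 0 := norm_ne_zero_iff.2 (sub_ne_zero.2 hyx)
  have hm : ‖x‖ ^ 2 - R ^ 2 ≠ 0 := by
    rw [sub_ne_zero]
    intro h
    exact hx ((pow_left_inj₀ (norm_nonneg _) hR.le two_ne_zero).1 h)
  rw [← NNReal.coe_pos, auxW_coe]
  positivity

lemma auxW_T (R : ℝ) (hR : 0 < R) (x y : E) (hx : ‖x‖ ≠ R) (hy : ‖y‖ = R) :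
    auxW R x (auxT R x y) = (auxW R x y)⁻¹ := by
  have hyx : y ≠ x := by rintro rfl; exact hx hy
  have h0 : ‖y - x‖ ≠ 0 := norm_ne_zero_iff.2 (sub_ne_zero.2 hyx)
  have hm : ‖x‖ ^ 2 - R ^ 2 ≠ 0 := by
    rw [sub_ne_zero]
    intro h
    exact hx ((pow_left_inj₀ (norm_nonneg _) hR.le two_ne_zero).1 h)
  apply NNReal.coe_injective
  rw [NNReal.coe_inv, auxW_coe, auxW_coe, auxT_norm_sub_sq _ _ _ hyx, ← sq_abs (‖x‖ ^ 2 - R ^ 2)]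
  have := abs_pos.2 hm
  field_simp

lemma auxT_dist (R : ℝ) (x y z : E) (hy : y ≠ x) (hz : z ≠ x) :
    dist (auxT R x y) (auxT R x z) =
      |‖x‖ ^ 2 - R ^ 2| / (‖y - x‖ * ‖z - x‖) * dist y z := by
  have h := dist_div_norm_sq_smul (sub_ne_zero.2 hy) (sub_ne_zero.2 hz) 1
  have e : ∀ y, auxT R x y = x + (‖x‖ ^ 2 - R ^ 2) • ((1 / ‖y - x‖) ^ 2 • (y - x)) := by
    intro y
    rw [auxT, smul_smul]; congr 2; ring
  rw [e y, e z, dist_add_left, dist_smul₀, h, dist_sub_right, Real.norm_eq_abs]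
  ring

lemma auxT_lip (R : ℝ) (hR : 0 < R) (x : E) (hx : ‖x‖ ≠ R) (K : ℝ≥0) (A : Set E)
    (hA : ∀ y ∈ A, ‖y‖ = R) (hK : ∀ y ∈ A, auxW R x y ≤ K) : LipschitzOnWith K (auxT R x) A := by
  apply LipschitzOnWith.of_dist_le_mul
  intro y hy z hz
  have hyx : y ≠ x := by rintro rfl; exact hx (hA _ hy)
  have hzx : z ≠ x := by rintro rfl; exact hx (hA _ hz)
  rw [auxT_dist R x y z hyx hzx]
  gcongr
  have h1 : ‖y - x‖ ≠ 0 := norm_ne_zero_iff.2 (sub_ne_zero.2 hyx)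
  have h2 : ‖z - x‖ ≠ 0 := norm_ne_zero_iff.2 (sub_ne_zero.2 hzx)
  apply abs_le_of_sq_le_sq' _ (by positivity) |>.2
  have k1 : (auxW R x y : ℝ) ≤ K := hK y hy
  have k2 : (auxW R x z : ℝ) ≤ K := hK z hz
  calc (|‖x‖ ^ 2 - R ^ 2| / (‖y - x‖ * ‖z - x‖)) ^ 2 = auxW R x y * auxW R x z := by
        rw [auxW_coe, auxW_coe]; field_simp
    _ ≤ K * K := by gcongr
    _ = _ := by ring
end

section
variable (k : ℕ) (R : ℝ) (x : EuclideanSpace ℝ (Fin (k + 1)))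

lemma auxT_meas : Measurable (auxT R x) := by
  unfold auxT; fun_prop

lemma auxW_meas : Measurable (auxW R x) := by
  unfold auxW; fun_prop

lemma aux_map_le (hk : 1 ≤ k) (hR : 0 < R) (hx : ‖x‖ ≠ R) :
    ((μH[k] : Measure (EuclideanSpace ℝ (Fin (k + 1)))).restrict (Metric.sphere 0 R)).map (auxT R x)
    ≤ ((μH[k] : Measure (EuclideanSpace ℝ (Fin (k + 1)))).restrict (Metric.sphere 0 R)).withDensity
      (fun y => ((auxW R x y ^ k : ℝ≥0) : ℝ≥0∞)) := by
  apply aux_wd_le _ _ _ ((auxW_meas k R x).pow_const k)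
  intro A hA M hM
  have hS : MeasurableSet (Metric.sphere (0 : EuclideanSpace ℝ (Fin (k + 1))) R) :=
    Metric.isClosed_sphere.measurableSet
  rw [Measure.map_apply (auxT_meas k R x) hA, Measure.restrict_apply (auxT_meas k R x hA),
    Measure.restrict_apply hA]
  have hk0 : (k : ℝ) ≠ 0 := by positivity
  set K : ℝ≥0 := M ^ ((1:ℝ) / k) with hKdef
  have hKM : K ^ (k:ℝ) = M := by
    rw [hKdef, ← NNReal.rpow_mul, one_div_mul_cancel hk0, NNReal.rpow_one]
  have hlip : LipschitzOnWith K (auxT R x) (A ∩ Metric.sphere 0 R) := by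
    apply auxT_lip R hR x hx
    · rintro y ⟨_, hy⟩; simpa using hy
    · rintro y ⟨hy, _⟩
      have := hM y hy
      rw [← hKM, NNReal.rpow_natCast] at this
      exact (pow_le_pow_iff_left₀ zero_le zero_le (by lia)).1 this
  have h1 := hlip.hausdorffMeasure_image_le (d := k) (by positivity)
  rw [← ENNReal.coe_rpow_of_nonneg _ (by positivity), hKM] at h1
  refine le_trans (measure_mono ?_) h1
  rintro y ⟨hy1, hy2⟩
  have hyR : ‖y‖ = R := by simpa using hy2
  exact ⟨auxT R x y, ⟨hy1, by simpa using auxT_mem R hR x y hx hyR⟩, auxT_invol R hR x y hx hyR⟩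

lemma aux_map_eq (hk : 1 ≤ k) (hR : 0 < R) (hx : ‖x‖ ≠ R) :
    ((μH[k] : Measure (EuclideanSpace ℝ (Fin (k + 1)))).restrict (Metric.sphere 0 R)).map (auxT R x)
    = ((μH[k] : Measure (EuclideanSpace ℝ (Fin (k + 1)))).restrict (Metric.sphere 0 R)).withDensity
      (fun y => ((auxW R x y ^ k : ℝ≥0) : ℝ≥0∞)) := by
  apply le_antisymm (aux_map_le k R x hk hR hx)
  have hle := aux_map_le k R x hk hR hx
  set μ := (μH[k] : Measure (EuclideanSpace ℝ (Fin (k + 1)))).restrict (Metric.sphere 0 R) with hμ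
  have hS : MeasurableSet (Metric.sphere (0 : EuclideanSpace ℝ (Fin (k + 1))) R) :=
    Metric.isClosed_sphere.measurableSet
  have hT := auxT_meas k R x
  have hae : ∀ᵐ y ∂μ, ‖y‖ = R := by
    filter_upwards [ae_restrict_mem hS] with y hy
    simpa using hy
  set f : EuclideanSpace ℝ (Fin (k + 1)) → ℝ≥0∞ := fun y => ((auxW R x y ^ k : ℝ≥0) : ℝ≥0∞) with hf
  have hfm : Measurable f := ((auxW_meas k R x).pow_const k).coe_nnreal_ennreal
  rw [Measure.le_iff]
  intro A hA
  rw [withDensity_apply _ hA, Measure.map_apply hT hA]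
  set φ : EuclideanSpace ℝ (Fin (k + 1)) → ℝ≥0∞ := fun y => A.indicator f (auxT R x y) with hφ
  have hφm : Measurable φ := (hfm.indicator hA).comp hT
  have h1 : ∫⁻ y, φ y ∂(μ.map (auxT R x)) ≤ ∫⁻ y, φ y ∂(μ.withDensity f) := lintegral_mono' hle le_rfl
  rw [lintegral_map hφm hT, lintegral_withDensity_eq_lintegral_mul _ hfm hφm] at h1
  calc ∫⁻ y in A, f y ∂μ = ∫⁻ y, A.indicator f y ∂μ := (lintegral_indicator hA _).symm
    _ = ∫⁻ y, φ (auxT R x y) ∂μ := by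
      apply lintegral_congr_ae
      filter_upwards [hae] with y hy
      simp only [hφ, auxT_invol R hR x y hx hy]
    _ ≤ ∫⁻ y, (f * φ) y ∂μ := h1
    _ = ∫⁻ y, ((auxT R x) ⁻¹' A).indicator 1 y ∂μ := by
      apply lintegral_congr_ae
      filter_upwards [hae] with y hy
      simp only [hφ, Pi.mul_apply]
      by_cases hyA : auxT R x y ∈ A
      · rw [Set.indicator_of_mem hyA, Set.indicator_of_mem (Set.mem_preimage.2 hyA)]
        simp only [hf]
        rw [auxW_T R hR x y hx hy, ← ENNReal.coe_mul, ← mul_pow,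
          mul_inv_cancel₀ (auxW_pos R hR x y hx hy).ne']
        simp
      · rw [Set.indicator_of_notMem hyA, Set.indicator_of_notMem (show y ∉ (auxT R x) ⁻¹' A from hyA)]
        simp
    _ = μ ((auxT R x) ⁻¹' A) := lintegral_indicator_one (hT hA)

lemma aux_symm (hk : 1 ≤ k) (hR : 0 < R) (hx : ‖x‖ ≠ R) (α : ℂ) :
    ∫ y in Metric.sphere (0 : EuclideanSpace ℝ (Fin (k + 1))) R,
      Complex.exp (α * (Real.log (auxW R x y) : ℝ)) ∂μH[k] =
    ∫ y in Metric.sphere (0 : EuclideanSpace ℝ (Fin (k + 1))) R,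
      Complex.exp ((k - α) * (Real.log (auxW R x y) : ℝ)) ∂μH[k] := by
  have hmap := aux_map_eq k R x hk hR hx
  set μ := (μH[k] : Measure (EuclideanSpace ℝ (Fin (k + 1)))).restrict (Metric.sphere 0 R) with hμ
  have hS : MeasurableSet (Metric.sphere (0 : EuclideanSpace ℝ (Fin (k + 1))) R) :=
    Metric.isClosed_sphere.measurableSet
  have hT := auxT_meas k R x
  have hW := auxW_meas k R x
  have hae : ∀ᵐ y ∂μ, ‖y‖ = R := by
    filter_upwards [ae_restrict_mem hS] with y hy
    simpa using hy
  have hgm : Measurable (fun y => Complex.exp (-α * (Real.log (auxW R x y) : ℝ))) := by fun_prop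
  have h1 := integral_map (μ := μ) hT.aemeasurable
    (f := fun y => Complex.exp (-α * (Real.log (auxW R x y) : ℝ))) hgm.aestronglyMeasurable
  rw [hmap, integral_withDensity_eq_integral_smul (hW.pow_const k)] at h1
  have e1 : ∫ y, Complex.exp (-α * (Real.log (auxW R x (auxT R x y)) : ℝ)) ∂μ
      = ∫ y, Complex.exp (α * (Real.log (auxW R x y) : ℝ)) ∂μ := by
    apply integral_congr_ae
    filter_upwards [hae] with y hy
    rw [auxW_T R hR x y hx hy, NNReal.coe_inv, Real.log_inv]
    congr 1
    push_cast
    ring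
  rw [← e1, ← h1]
  apply integral_congr_ae
  filter_upwards [hae] with y hy
  have hp : (0:ℝ) < auxW R x y := auxW_pos R hR x y hx hy
  have : ((auxW R x y : ℝ) : ℂ) ^ k = Complex.exp (k * (Real.log (auxW R x y) : ℝ)) := by
    rw [Complex.exp_nat_mul, ← Complex.ofReal_exp, Real.exp_log hp]
  rw [NNReal.smul_def, Complex.real_smul]
  push_cast
  rw [this, ← Complex.exp_add]
  congr 1
  ring
end

lemma aux_logW_bound {E : Type*} [NormedAddCommGroup E] [InnerProductSpace ℝ E] (R : ℝ) (hR : 0 < R)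
    (x y : E) (hx0 : 0 < ‖x‖) (hx : ‖x‖ ≠ R) (hy : ‖y‖ = R) :
    |Real.log (auxW R x y)| ≤ Real.log ((R + ‖x‖) / |R - ‖x‖|) := by
  have hp : (0:ℝ) < auxW R x y := auxW_pos R hR x y hx hy
  have hd : 0 < |R - ‖x‖| := abs_pos.2 (sub_ne_zero.2 hx.symm)
  have h1 : |R - ‖x‖| ≤ ‖y - x‖ := by rw [← hy]; exact abs_norm_sub_norm_le y x
  have h2 : ‖y - x‖ ≤ R + ‖x‖ := by rw [← hy]; exact norm_sub_le y x
  have hs : 0 < ‖y - x‖ := lt_of_lt_of_le hd h1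
  have hm : |‖x‖ ^ 2 - R ^ 2| = |R - ‖x‖| * (R + ‖x‖) := by
    rw [← abs_of_pos (show 0 < R + ‖x‖ by positivity), ← abs_mul, ← abs_neg]
    congr 1; ring
  rw [abs_le]
  constructor
  · rw [← Real.log_inv]
    apply Real.log_le_log (by positivity)
    rw [auxW_coe, hm, inv_div]
    rw [div_le_div_iff₀ (by positivity) (by positivity)]
    calc |R - ‖x‖| * ‖y - x‖ ^ 2 ≤ |R - ‖x‖| * (R + ‖x‖) ^ 2 := by gcongr
      _ = _ := by ring
  · apply Real.log_le_log hp
    rw [auxW_coe, hm]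
    rw [div_le_div_iff₀ (by positivity) (by positivity)]
    calc |R - ‖x‖| * (R + ‖x‖) * |R - ‖x‖| = (R + ‖x‖) * |R - ‖x‖| ^ 2 := by ring
      _ ≤ _ := by gcongr

lemma aux_integrable (k : ℕ) (R : ℝ) (hR : 0 < R) (x : EuclideanSpace ℝ (Fin (k + 1)))
    (hx0 : 0 < ‖x‖) (hx : ‖x‖ ≠ R) (α : ℂ) :
    IntegrableOn (fun y => Complex.exp (α * (Real.log (auxW R x y) : ℝ)))
      (Metric.sphere (0 : EuclideanSpace ℝ (Fin (k + 1))) R) μH[k] := by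
  have hW := auxW_meas k R x
  have hgm : Measurable (fun y => Complex.exp (α * (Real.log (auxW R x y) : ℝ))) := by fun_prop
  apply IntegrableOn.of_bound (aux_finite k R hR) hgm.aestronglyMeasurable
    (Real.exp (‖α‖ * Real.log ((R + ‖x‖) / |R - ‖x‖|)))
  filter_upwards [ae_restrict_mem Metric.isClosed_sphere.measurableSet] with y hy
  have hyR : ‖y‖ = R := by simpa using hy
  refine (Complex.norm_exp_le_exp_norm _).trans ?_
  rw [norm_mul, Complex.norm_real, Real.norm_eq_abs]
  gcongr
  exact aux_logW_bound R hR x y hx0 hx hyR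

/-- Main Theorem, Statement (D): if
`max (|Im α|, |Im β|) ≤ (π/2) / log ((R + r)/|R − r|)` with `r = ‖x‖`, then equality of the
integrals `∫_{S^k(R)} ω^α = ∫_{S^k(R)} ω^β` implies `α + β = k` or `α = β`. -/
theorem main_theorem_statement_D
    (k : ℕ) (hk : 1 ≤ k) (R : ℝ) (hR : 0 < R)
    (x : EuclideanSpace ℝ (Fin (k + 1))) (hx0 : 0 < ‖x‖) (hx : ‖x‖ ≠ R)
    (α β : ℂ)
    (him : max |α.im| |β.im| ≤ (π / 2) / Real.log ((R + ‖x‖) / |R - ‖x‖|))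
    (h : ∫ y in Metric.sphere (0 : EuclideanSpace ℝ (Fin (k + 1))) R,
          ((|‖x‖ ^ 2 - ‖y‖ ^ 2| / ‖x - y‖ ^ 2 : ℝ) : ℂ) ^ α ∂μH[k]
        = ∫ y in Metric.sphere (0 : EuclideanSpace ℝ (Fin (k + 1))) R,
          ((|‖x‖ ^ 2 - ‖y‖ ^ 2| / ‖x - y‖ ^ 2 : ℝ) : ℂ) ^ β ∂μH[k]) :
    α + β = (k : ℂ) ∨ α = β := by
  have hS : MeasurableSet (Metric.sphere (0 : EuclideanSpace ℝ (Fin (k + 1))) R) :=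
    Metric.isClosed_sphere.measurableSet
  have hconv : ∀ γ : ℂ, ∫ y in Metric.sphere (0 : EuclideanSpace ℝ (Fin (k + 1))) R,
          ((|‖x‖ ^ 2 - ‖y‖ ^ 2| / ‖x - y‖ ^ 2 : ℝ) : ℂ) ^ γ ∂μH[k] =
      ∫ y in Metric.sphere (0 : EuclideanSpace ℝ (Fin (k + 1))) R,
        Complex.exp (γ * (Real.log (auxW R x y) : ℝ)) ∂μH[k] := by
    intro γ
    apply setIntegral_congr_fun hS
    intro y hy
    have hyR : ‖y‖ = R := by simpa using hy
    have hp : (0:ℝ) < auxW R x y := auxW_pos R hR x y hx hyR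
    simp only []
    rw [hyR, norm_sub_rev x y, ← auxW_coe R x y,
      Complex.cpow_def_of_ne_zero (by exact_mod_cast hp.ne'), ← Complex.ofReal_log hp.le, mul_comm]
  rw [hconv, hconv] at h
  by_contra hcon
  push Not at hcon
  obtain ⟨hc1, hc2⟩ := hcon
  set p : ℂ := (α + β - k) / 2 with hpdef
  set q : ℂ := (α - β) / 2 with hqdef
  have hp0 : p ≠ 0 := div_ne_zero (sub_ne_zero.2 hc1) two_ne_zero
  have hq0 : q ≠ 0 := div_ne_zero (sub_ne_zero.2 hc2) two_ne_zero
  set L := Real.log ((R + ‖x‖) / |R - ‖x‖|) with hL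
  have hLpos : 0 < L := by
    apply Real.log_pos
    rw [one_lt_div (abs_pos.2 (sub_ne_zero.2 hx.symm)), abs_lt]
    constructor <;> linarith
  have hpq : (|p.im| + |q.im|) * L ≤ π / 2 := by
    rw [← le_div_iff₀ hLpos]
    refine le_trans ?_ him
    have e1 : p.im = (α.im + β.im) / 2 := by simp [hpdef]
    have e2 : q.im = (α.im - β.im) / 2 := by simp [hqdef]
    rw [e1, e2]
    rcases abs_cases ((α.im + β.im) / 2) with ⟨h1, _⟩ | ⟨h1, _⟩ <;>
    rcases abs_cases ((α.im - β.im) / 2) with ⟨h2, _⟩ | ⟨h2, _⟩ <;> rw [h1, h2]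
    · exact le_trans (by linarith [le_abs_self α.im]) (le_max_left _ _)
    · exact le_trans (by linarith [le_abs_self β.im]) (le_max_right _ _)
    · exact le_trans (by linarith [neg_abs_le β.im]) (le_max_right _ _)
    · exact le_trans (by linarith [neg_abs_le α.im]) (le_max_left _ _)
  set μ := (μH[k] : Measure (EuclideanSpace ℝ (Fin (k + 1)))).restrict (Metric.sphere 0 R) with hμ
  set ℓ : EuclideanSpace ℝ (Fin (k + 1)) → ℝ := fun y => Real.log (auxW R x y) with hℓ
  have hExpInt : ∀ γ : ℂ, Integrable (fun y => Complex.exp (γ * (ℓ y : ℝ))) μ :=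
    fun γ => aux_integrable k R hR x hx0 hx γ
  have hsym : ∀ γ : ℂ, ∫ y, Complex.exp (γ * (ℓ y : ℝ)) ∂μ =
    ∫ y, Complex.exp ((k - γ) * (ℓ y : ℝ)) ∂μ := fun γ => aux_symm k R x hk hR hx γ
  have h' : ∫ y, Complex.exp (α * (ℓ y : ℝ)) ∂μ = ∫ y, Complex.exp (β * (ℓ y : ℝ)) ∂μ := h
  let G : EuclideanSpace ℝ (Fin (k + 1)) → ℂ := fun y =>
    (Complex.exp (α * (ℓ y : ℝ)) + Complex.exp ((k - α) * (ℓ y : ℝ)) -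
      (Complex.exp (β * (ℓ y : ℝ)) + Complex.exp ((k - β) * (ℓ y : ℝ)))) / (p * q)
  have hGint : Integrable G μ :=
    (((hExpInt α).add (hExpInt (k - α))).sub ((hExpInt β).add (hExpInt (k - β)))).div_const _
  have hG0 : ∫ y, G y ∂μ = 0 := by
    simp only [G]
    have i1 : Integrable (fun y => Complex.exp (α * (ℓ y : ℝ)) +
      Complex.exp ((k - α) * (ℓ y : ℝ))) μ := (hExpInt α).add (hExpInt (k - α))
    have i2 : Integrable (fun y => Complex.exp (β * (ℓ y : ℝ)) +
      Complex.exp ((k - β) * (ℓ y : ℝ))) μ := (hExpInt β).add (hExpInt (k - β))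
    rw [integral_div, integral_sub i1 i2, integral_add (hExpInt α) (hExpInt (k - α)), integral_add (hExpInt β) (hExpInt (k - β)),
      ← hsym α, ← hsym β, h']
    simp
  have hGeq : ∀ y, G y = ((4 * Real.exp (k / 2 * ℓ y) : ℝ) : ℂ) *
      (Complex.sinh (p * ℓ y) * Complex.sinh (q * ℓ y) / (p * q)) := by
    intro y
    simp only [G]
    rw [← mul_div_assoc]
    congr 1
    simp only [Complex.sinh]
    push_cast
    have a1 : α * (ℓ y : ℂ) = k / 2 * ℓ y + p * ℓ y + q * ℓ y := by rw [hpdef, hqdef]; ring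
    have a2 : (k - α) * (ℓ y : ℂ) = k / 2 * ℓ y + -(p * ℓ y) + -(q * ℓ y) := by
      rw [hpdef, hqdef]; ring
    have a3 : β * (ℓ y : ℂ) = k / 2 * ℓ y + p * ℓ y + -(q * ℓ y) := by rw [hpdef, hqdef]; ring
    have a4 : (k - β) * (ℓ y : ℂ) = k / 2 * ℓ y + -(p * ℓ y) + q * ℓ y := by
      rw [hpdef, hqdef]; ring
    rw [a1, a2, a3, a4]
    simp only [Complex.exp_add]
    ring
  have hpos : ∀ y, ‖y‖ = R → ℓ y ≠ 0 → 0 < (G y).re := by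
    intro y hy hl
    rw [hGeq, Complex.re_ofReal_mul]
    refine mul_pos (by positivity) (aux_scalar p q hp0 hq0 _ hl (le_trans ?_ hpq))
    gcongr
    exact aux_logW_bound R hR x y hx0 hx hy
  have hae : ∀ᵐ y ∂μ, ‖y‖ = R := by
    filter_upwards [ae_restrict_mem hS] with y hy
    simpa using hy
  have hre0 : ∫ y, (G y).re ∂μ = 0 := by
    have := integral_re hGint
    simp only [RCLike.re_eq_complex_re] at this
    rw [this, hG0]; simp
  have hnn : 0 ≤ᵐ[μ] fun y => (G y).re := by
    filter_upwards [hae] with y hy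
    rcases eq_or_ne (ℓ y) 0 with hl | hl
    · simp [hGeq, hl]
    · exact (hpos y hy hl).le
  have hz := (integral_eq_zero_iff_of_nonneg_ae hnn hGint.re).1 hre0
  have hl0 : ∀ᵐ y ∂μ, ℓ y = 0 := by
    filter_upwards [hae, hz] with y hy hzy
    by_contra hl
    exact (hpos y hy hl).ne' hzy
  set n := ‖x‖⁻¹ • x with hndef
  have hn : ‖n‖ = 1 := by
    rw [hndef, norm_smul, norm_inv, norm_norm, inv_mul_cancel₀ hx0.ne']
  have hU : IsOpen {y : EuclideanSpace ℝ (Fin (k + 1)) | ‖y - x‖ ^ 2 ≠ |‖x‖ ^ 2 - R ^ 2|} :=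
    isOpen_ne_fun (by fun_prop) (by fun_prop)
  have hRn : R • n ∈ {y : EuclideanSpace ℝ (Fin (k + 1)) | ‖y - x‖ ^ 2 ≠ |‖x‖ ^ 2 - R ^ 2|} := by
    have e : R • n - x = (R - ‖x‖) • n := by
      rw [sub_smul]; congr 1
      rw [hndef, smul_smul, mul_inv_cancel₀ hx0.ne', one_smul]
    change ‖R • n - x‖ ^ 2 ≠ |‖x‖ ^ 2 - R ^ 2|
    rw [e, norm_smul, hn, mul_one, Real.norm_eq_abs]
    have hd : 0 < |R - ‖x‖| := abs_pos.2 (sub_ne_zero.2 hx.symm)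
    have hm : |‖x‖ ^ 2 - R ^ 2| = |R - ‖x‖| * (R + ‖x‖) := by
      rw [← abs_of_pos (show 0 < R + ‖x‖ by positivity), ← abs_mul, ← abs_neg]
      congr 1; ring
    rw [hm, sq]
    intro hh
    have h2 := mul_left_cancel₀ hd.ne' hh
    rcases abs_cases (R - ‖x‖) with ⟨h3, _⟩ | ⟨h3, _⟩ <;> linarith
  have hfin := aux_posm k R hR n hn _ hU hRn
  rw [← Measure.restrict_apply hU.measurableSet] at hfin
  refine hfin.ne' ?_
  refine measure_mono_null ?_ (ae_iff.1 (hl0.and hae))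
  intro y hy hy2
  obtain ⟨hl, hyR⟩ := hy2
  apply hy
  have hp : (0:ℝ) < auxW R x y := auxW_pos R hR x y hx hyR
  have h1 : (auxW R x y : ℝ) = 1 := Real.eq_one_of_pos_of_log_eq_zero hp hl
  have hs : ‖y - x‖ ^ 2 ≠ 0 := by
    intro h0; rw [auxW_coe, h0] at h1; simp at h1
  rw [auxW_coe, div_eq_one_iff_eq hs] at h1
  exact h1.symm
end

section
/- Let k ≥ 1, R > 0, and x ∈ E with ‖x‖ ≠ R. Then for every b ∈ ℝ: (i) ∫_{y ∈ S^k(R)} ω(x,y)^{k/2 + ib} dμH[k](y) = ∫_{y ∈ S^k(R)} ω(x,y)^{k/2} · cos(b · Real.log ω(x,y)) dμH[k](y) (the left side a ℂ-valued integral, the right side real); and (ii) for every natural number m, ∫_{y ∈ S^k(R)} ω(x,y)^{k/2} · (Real.log ω(x,y))^{2m+1} · cos(b · Real.log ω(x,y)) dμH[k](y) = 0 and ∫_{y ∈ S^k(R)} ω(x,y)^{k/2} · (Real.log ω(x,y))^{2m} · sin(b · Real.log ω(x,y)) dμH[k](y) = 0. -/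
open MeasureTheory Real Complex


lemma sphere_hausdorff_lt_top (k : ℕ) (R : ℝ) (hR : 0 < R) :
    μH[(k : ℝ)] (Metric.sphere (0 : EuclideanSpace ℝ (Fin (k + 1))) R) < ⊤ := by
  let v : Fin (k+1) → ℝ → (Fin k → ℝ) → EuclideanSpace ℝ (Fin (k + 1)) :=
    fun i s u => WithLp.toLp 2 (i.insertNth s u : Fin (k+1) → ℝ)
  let φ : Fin (k+1) → ℝ → (Fin k → ℝ) → EuclideanSpace ℝ (Fin (k + 1)) :=
    fun i s u => (R * ‖v i s u‖⁻¹) • v i s u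
  have hv : ∀ i s, ContDiff ℝ 1 (v i s) := by
    intro i s
    rw [contDiff_euclidean]
    intro j
    refine Fin.succAboveCases i ?_ ?_ j
    · simp only [v, Fin.insertNth_apply_same]; exact contDiff_const
    · intro j
      simp only [v, Fin.insertNth_apply_succAbove]; fun_prop
  have hv0 : ∀ i s u, s ≠ 0 → v i s u ≠ 0 := by
    intro i s u hs h
    have := congrArg (fun z : EuclideanSpace ℝ (Fin (k + 1)) => z i) h
    simp [v] at this
    exact hs this
  have hφ : ∀ i s, s ≠ 0 → ContDiff ℝ 1 (φ i s) := by
    intro i s hs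
    have h1 : ContDiff ℝ 1 (fun u => ‖v i s u‖) := (hv i s).norm ℝ (fun u => hv0 i s u hs)
    exact (contDiff_const.mul (h1.inv (fun u => norm_ne_zero_iff.2 (hv0 i s u hs)))).smul (hv i s)
  let Q : Set (Fin k → ℝ) := Metric.closedBall 0 1
  have hQ : IsCompact Q := isCompact_closedBall _ _
  have hfin : ∀ i s, s ≠ 0 → μH[(k : ℝ)] (φ i s '' Q) < ⊤ := by
    intro i s hs
    obtain ⟨K, hK⟩ := LocallyLipschitzOn.exists_lipschitzOnWith_of_compact hQ
      (((hφ i s hs).locallyLipschitz).locallyLipschitzOn (s := Q))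
    refine (hK.hausdorffMeasure_image_le (Nat.cast_nonneg k)).trans_lt ?_
    refine ENNReal.mul_lt_top (ENNReal.rpow_lt_top_of_nonneg (Nat.cast_nonneg k) (by simp)) ?_
    have := hausdorffMeasure_pi_real (ι := Fin k)
    rw [Fintype.card_fin] at this
    rw [this]
    exact hQ.measure_lt_top
  have hcov : Metric.sphere (0 : EuclideanSpace ℝ (Fin (k + 1))) R ⊆
      ⋃ i, (φ i 1 '' Q ∪ φ i (-1) '' Q) := by
    intro y hy
    have hyR : ‖y‖ = R := by simpa using hy
    obtain ⟨i, -, hi⟩ := Finset.exists_max_image Finset.univ (fun i => |y i|) ⟨0, by simp⟩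
    have hm : 0 < |y i| := by
      rw [abs_pos]
      intro h0
      have : y = 0 := by
        ext j
        have := hi j (by simp)
        rw [h0] at this
        simpa using this
      rw [this] at hyR
      simp at hyR
      linarith
    have key : ∀ s, s * |y i| = y i → y ∈ φ i s '' Q := by
      intro s hs
      refine ⟨fun j => |y i|⁻¹ * y (i.succAbove j), ?_, ?_⟩
      · simp only [Q, mem_closedBall_zero_iff]
        rw [pi_norm_le_iff_of_nonneg zero_le_one]
        intro j
        rw [norm_mul, norm_inv, Real.norm_eq_abs, Real.norm_eq_abs, abs_abs, inv_mul_le_iff₀ hm]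
        simpa using hi (i.succAbove j) (by simp)
      · have hvy : v i s (fun j => |y i|⁻¹ * y (i.succAbove j)) = |y i|⁻¹ • y := by
          ext j
          refine Fin.succAboveCases i ?_ ?_ j
          · simp only [v, Fin.insertNth_apply_same, PiLp.smul_apply, smul_eq_mul]
            field_simp; linarith
          · intro j
            simp only [v, Fin.insertNth_apply_succAbove, PiLp.smul_apply, smul_eq_mul]
        simp only [φ, hvy, norm_smul, hyR, norm_inv, Real.norm_eq_abs, abs_abs, smul_smul]
        have : R * (|y i|⁻¹ * R)⁻¹ * |y i|⁻¹ = 1 := by field_simp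
        rw [this, one_smul]
    refine Set.mem_iUnion.2 ⟨i, ?_⟩
    rcases le_total 0 (y i) with h | h
    · left; apply key; rw [abs_of_nonneg h, one_mul]
    · right; apply key; rw [abs_of_nonpos h]; ring
  refine (measure_mono hcov).trans_lt ?_
  refine (measure_iUnion_le _).trans_lt ?_
  rw [tsum_fintype]
  refine ENNReal.sum_lt_top.2 (fun i _ => ?_)
  exact measure_union_lt_top (hfin i 1 one_ne_zero) (hfin i (-1) (by norm_num))


section
variable {E : Type*} [NormedAddCommGroup E] [InnerProductSpace ℝ E]

noncomputable def secT (c : ℝ) (x y : E) : E := x + (c / ‖y - x‖ ^ 2) • (y - x)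

lemma secT_norm (c : ℝ) (x y : E) : ‖secT c x y - x‖ = |c| / ‖y - x‖ := by
  rcases eq_or_ne (‖y - x‖) 0 with h | h
  · simp [secT, h]
  · simp only [secT, add_sub_cancel_left, norm_smul, norm_div, norm_pow, Real.norm_eq_abs, abs_norm]
    field_simp

lemma secT_secT (c : ℝ) (hc : c ≠ 0) (x y : E) : secT c x (secT c x y) = y := by
  rcases eq_or_ne (y - x) 0 with h | h
  · rw [sub_eq_zero] at h; simp [secT, h]
  · have h' : ‖y - x‖ ≠ 0 := norm_ne_zero_iff.2 h
    have e : secT c x (secT c x y) = x + (c / ‖secT c x y - x‖ ^ 2) • (secT c x y - x) := rfl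
    have e2 : secT c x y - x = (c / ‖y - x‖ ^ 2) • (y - x) := by simp [secT]
    rw [e, secT_norm, e2, smul_smul]
    have : c / (|c| / ‖y - x‖) ^ 2 * (c / ‖y - x‖ ^ 2) = 1 := by
      rw [div_pow, sq_abs]; field_simp
    rw [this, one_smul]; abel

lemma secT_dist (c : ℝ) (x y z : E) (hy : y ≠ x) (hz : z ≠ x) :
    dist (secT c x y) (secT c x z) = |c| / (‖y - x‖ * ‖z - x‖) * dist y z := by
  have h := dist_div_norm_sq_smul (sub_ne_zero.2 hy) (sub_ne_zero.2 hz) (√|c|)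
  rw [dist_sub_right, Real.sq_sqrt (abs_nonneg c), dist_eq_norm] at h
  have e : ∀ w : E, (√|c| / ‖w‖) ^ 2 = |c| / ‖w‖ ^ 2 := fun w => by
    rw [div_pow, Real.sq_sqrt (abs_nonneg c)]
  rw [e, e] at h
  rw [← h, secT, secT, dist_add_left, dist_eq_norm]
  rcases abs_cases c with ⟨h1, -⟩ | ⟨h1, -⟩
  · rw [h1]
  · rw [h1, neg_div, neg_div, neg_smul, neg_smul, ← norm_neg]; congr 1; abel

lemma secT_mem (x y : E) (R : ℝ) (hR : 0 < R) (hx : ‖x‖ ≠ R) (hy : ‖y‖ = R) :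
    ‖secT (‖x‖ ^ 2 - R ^ 2) x y‖ = R := by
  have hne : y - x ≠ 0 := by
    intro h; rw [sub_eq_zero] at h; rw [h] at hy; exact hx hy
  have h' : ‖y - x‖ ≠ 0 := norm_ne_zero_iff.2 hne
  have : ‖secT (‖x‖ ^ 2 - R ^ 2) x y‖ ^ 2 = R ^ 2 := by
    have h2 : ‖y‖ ^ 2 = ‖x‖ ^ 2 + 2 * inner ℝ x (y - x) + ‖y - x‖ ^ 2 := by
      rw [← norm_add_sq_real]; congr 2; abel
    rw [secT, norm_add_sq_real, inner_smul_right, norm_smul, norm_div, norm_pow, norm_norm, mul_pow,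
      div_pow, Real.norm_eq_abs, sq_abs]
    rw [hy] at h2
    have h3 : inner ℝ x (y - x) = (R ^ 2 - ‖x‖ ^ 2 - ‖y - x‖ ^ 2) / 2 := by linarith
    rw [h3]; field_simp; ring
  nlinarith [norm_nonneg (secT (‖x‖ ^ 2 - R ^ 2) x y)]

lemma secT_measurable [MeasurableSpace E] [BorelSpace E] [SecondCountableTopology E]
    (c : ℝ) (x : E) : Measurable (secT c x) := by
  unfold secT; fun_prop

/-- the weight -/
noncomputable def wt (c : ℝ) (x y : E) : ℝ := |c| / ‖x - y‖ ^ 2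

lemma wt_secT (c : ℝ) (hc : c ≠ 0) (x y : E) : wt c x (secT c x y) = (wt c x y)⁻¹ := by
  rw [wt, wt, ← norm_neg, neg_sub, secT_norm, norm_sub_rev x y]
  have := abs_pos.2 hc
  rcases eq_or_ne (‖y - x‖) 0 with h | h
  · simp [h]
  · field_simp

lemma wt_measurable [MeasurableSpace E] [BorelSpace E] [SecondCountableTopology E]
    (c : ℝ) (x : E) : Measurable (wt c x) := by
  unfold wt; fun_prop

noncomputable def secEquiv [MeasurableSpace E] [BorelSpace E] [SecondCountableTopology E]
    (c : ℝ) (hc : c ≠ 0) (x : E) : E ≃ᵐ E where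
  toFun := secT c x
  invFun := secT c x
  left_inv := secT_secT c hc x
  right_inv := secT_secT c hc x
  measurable_toFun := secT_measurable c x
  measurable_invFun := secT_measurable c x

noncomputable def nuM [MeasurableSpace E] [BorelSpace E] [SecondCountableTopology E]
    (k : ℕ) (R c : ℝ) (x : E) : Measure E :=
  (μH[(k : ℝ)].restrict (Metric.sphere (0 : E) R)).withDensity
    (fun y => ENNReal.ofReal (wt c x y ^ ((k : ℝ) / 2)))

/-- Core estimate on a thin level set of the weight. -/
lemma nuM_piece [MeasurableSpace E] [BorelSpace E] [SecondCountableTopology E]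
    (k : ℕ) (R : ℝ) (hR : 0 < R) (x : E) (hx : ‖x‖ ≠ R) (c : ℝ) (hcd : c = ‖x‖ ^ 2 - R ^ 2)
    (hc : c ≠ 0)
    (A : Set E) (hA : MeasurableSet A) (hAS : A ⊆ Metric.sphere (0 : E) R) (a t : ℝ) (ha : 0 < a)
    (ht : 1 < t) (hAw : ∀ y ∈ A, a ≤ wt c x y ∧ wt c x y < a * t) :
    nuM k R c x (secT c x '' A) ≤ ENNReal.ofReal (t ^ (k : ℝ)) * nuM k R c x A := by
  have hk0 : (0 : ℝ) ≤ k := Nat.cast_nonneg k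
  have hk2 : (0 : ℝ) ≤ (k : ℝ) / 2 := by positivity
  have ht0 : 0 < t := by linarith
  have hTA : MeasurableSet (secT c x '' A) := (secEquiv c hc x).measurableSet_image.2 hA
  have hnex : ∀ y ∈ A, y ≠ x := by
    rintro y hy rfl
    exact hx (by simpa using hAS hy)
  have hTS : secT c x '' A ⊆ Metric.sphere (0 : E) R := by
    rintro _ ⟨y, hy, rfl⟩
    have : ‖y‖ = R := by simpa using hAS hy
    simpa [hcd] using secT_mem x y R hR hx this
  have hLip : LipschitzOnWith (Real.toNNReal (a * t)) (secT c x) A := by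
    refine LipschitzOnWith.of_dist_le_mul (fun y hy z hz => ?_)
    rw [secT_dist c x y z (hnex y hy) (hnex z hz), Real.coe_toNNReal _ (by positivity)]
    refine mul_le_mul_of_nonneg_right ?_ dist_nonneg
    have hy1 := (hAw y hy).2.le
    have hz1 := (hAw z hz).2.le
    have py : 0 < ‖y - x‖ := norm_pos_iff.2 (sub_ne_zero.2 (hnex y hy))
    have pz : 0 < ‖z - x‖ := norm_pos_iff.2 (sub_ne_zero.2 (hnex z hz))
    rw [wt, norm_sub_rev, div_le_iff₀ (by positivity)] at hy1 hz1
    rw [div_le_iff₀ (by positivity)]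
    refine abs_le_of_sq_le_sq' ?_ (by positivity) |>.2
    have := mul_le_mul hy1 hz1 (abs_nonneg c) (by positivity)
    calc |c| ^ 2 = |c| * |c| := by ring
      _ ≤ _ := this
      _ = _ := by ring
  have hH := hLip.hausdorffMeasure_image_le hk0
  have h1 : nuM k R c x (secT c x '' A) ≤
      ENNReal.ofReal ((a⁻¹) ^ ((k : ℝ) / 2)) * μH[(k : ℝ)] (secT c x '' A) := by
    rw [nuM, withDensity_apply _ hTA, Measure.restrict_restrict hTA,
      Set.inter_eq_self_of_subset_left hTS, ← setLIntegral_const]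
    refine setLIntegral_mono measurable_const ?_
    rintro _ ⟨y, hy, rfl⟩
    refine ENNReal.ofReal_le_ofReal ?_
    rw [wt_secT c hc]
    have := (hAw y hy).1
    refine Real.rpow_le_rpow (inv_nonneg.2 (ha.le.trans this)) ?_ hk2
    exact inv_anti₀ ha this
  have h2 : ENNReal.ofReal (a ^ ((k : ℝ) / 2)) * μH[(k : ℝ)] A ≤ nuM k R c x A := by
    rw [nuM, withDensity_apply _ hA, Measure.restrict_restrict hA,
      Set.inter_eq_self_of_subset_left hAS, ← setLIntegral_const]
    refine setLIntegral_mono' hA ?_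
    intro y hy
    exact ENNReal.ofReal_le_ofReal (Real.rpow_le_rpow ha.le (hAw y hy).1 hk2)
  have e1 : ((Real.toNNReal (a * t) : NNReal) : ENNReal) ^ (k : ℝ)
      = ENNReal.ofReal ((a * t) ^ (k : ℝ)) :=
    ENNReal.ofReal_rpow_of_nonneg (by positivity) hk0
  have e2 : (a⁻¹) ^ ((k : ℝ) / 2) * (a * t) ^ (k : ℝ) = t ^ (k : ℝ) * a ^ ((k : ℝ) / 2) := by
    rw [Real.mul_rpow ha.le ht0.le, Real.inv_rpow ha.le]
    have : a ^ (k : ℝ) = a ^ ((k : ℝ) / 2) * a ^ ((k : ℝ) / 2) := by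
      rw [← Real.rpow_add ha]; congr 1; ring
    rw [this]
    have : a ^ ((k : ℝ) / 2) ≠ 0 := (Real.rpow_pos_of_pos ha _).ne'
    field_simp
  calc _ ≤ _ := h1
    _ ≤ ENNReal.ofReal ((a⁻¹) ^ ((k : ℝ) / 2)) *
        (ENNReal.ofReal ((a * t) ^ (k : ℝ)) * μH[(k : ℝ)] A) := by
        rw [← e1]; gcongr
    _ = ENNReal.ofReal (t ^ (k : ℝ)) * (ENNReal.ofReal (a ^ ((k : ℝ) / 2)) * μH[(k : ℝ)] A) := by
        rw [← mul_assoc, ← mul_assoc, ← ENNReal.ofReal_mul (by positivity), e2,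
          ENNReal.ofReal_mul (by positivity)]
    _ ≤ _ := by gcongr

lemma nuM_le_t [MeasurableSpace E] [BorelSpace E] [SecondCountableTopology E]
    (k : ℕ) (R : ℝ) (hR : 0 < R) (x : E) (hx : ‖x‖ ≠ R) (c : ℝ) (hcd : c = ‖x‖ ^ 2 - R ^ 2)
    (hc : c ≠ 0)
    (A : Set E) (hA : MeasurableSet A) (hAS : A ⊆ Metric.sphere (0 : E) R) (t : ℝ)
    (ht : 1 < t) :
    nuM k R c x (secT c x '' A) ≤ ENNReal.ofReal (t ^ (k : ℝ)) * nuM k R c x A := by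
  let B : ℤ → Set E := fun n => A ∩ wt c x ⁻¹' Set.Ico (t ^ n) (t ^ (n + 1))
  have hB : ∀ n, MeasurableSet (B n) := fun n => hA.inter (wt_measurable c x measurableSet_Ico)
  have hU : A = ⋃ n, B n := by
    ext y
    simp only [B, Set.mem_iUnion, Set.mem_inter_iff, exists_and_left, Set.mem_preimage]
    refine ⟨fun hy => ⟨hy, exists_mem_Ico_zpow ?_ ht⟩, fun h => h.1⟩
    have : y ≠ x := by
      rintro rfl
      exact hx (by simpa using hAS hy)
    have : 0 < ‖x - y‖ := norm_pos_iff.2 (sub_ne_zero.2 this.symm)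
    have := abs_pos.2 hc
    unfold wt; positivity
  have hd : Pairwise (Function.onFun Disjoint B) := by
    intro m n hmn
    refine Disjoint.mono Set.inter_subset_right Set.inter_subset_right ?_
    exact Disjoint.preimage _ ((zpow_right_mono₀ ht.le).pairwise_disjoint_on_Ico_succ hmn)
  calc nuM k R c x (secT c x '' A) = nuM k R c x (⋃ n, secT c x '' B n) := by
        conv_lhs => rw [hU, Set.image_iUnion]
    _ ≤ ∑' n, nuM k R c x (secT c x '' B n) := measure_iUnion_le _
    _ ≤ ∑' n, ENNReal.ofReal (t ^ (k : ℝ)) * nuM k R c x (B n) := by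
        refine ENNReal.tsum_le_tsum (fun n => ?_)
        refine nuM_piece k R hR x hx c hcd hc (B n) (hB n) (Set.inter_subset_left.trans hAS) (t ^ n) t
          (zpow_pos (by linarith) n) ht (fun y hy => ?_)
        have := hy.2
        rw [Set.mem_preimage, zpow_add_one₀ (by linarith)] at this
        exact this
    _ = ENNReal.ofReal (t ^ (k : ℝ)) * nuM k R c x A := by
        rw [ENNReal.tsum_mul_left, ← measure_iUnion hd hB, ← hU]

lemma nuM_le [MeasurableSpace E] [BorelSpace E] [SecondCountableTopology E]
    (k : ℕ) (R : ℝ) (hR : 0 < R) (x : E) (hx : ‖x‖ ≠ R) (c : ℝ) (hcd : c = ‖x‖ ^ 2 - R ^ 2)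
    (hc : c ≠ 0)
    (A : Set E) (hA : MeasurableSet A) (hAS : A ⊆ Metric.sphere (0 : E) R) :
    nuM k R c x (secT c x '' A) ≤ nuM k R c x A := by
  have hlim : Filter.Tendsto (fun t : ℝ => ENNReal.ofReal (t ^ (k : ℝ)) * nuM k R c x A)
      (nhdsWithin 1 (Set.Ioi 1)) (nhds (nuM k R c x A)) := by
    have h1 : Filter.Tendsto (fun t : ℝ => ENNReal.ofReal (t ^ (k : ℝ)))
        (nhdsWithin 1 (Set.Ioi 1)) (nhds 1) := by
      have : Continuous (fun t : ℝ => ENNReal.ofReal (t ^ (k : ℝ))) :=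
        ENNReal.continuous_ofReal.comp (Real.continuous_rpow_const (Nat.cast_nonneg k))
      have := (this.tendsto 1).mono_left (nhdsWithin_le_nhds (s := Set.Ioi 1))
      simpa using this
    have := ENNReal.Tendsto.mul_const (b := nuM k R c x A) h1 (Or.inl one_ne_zero)
    simpa using this
  refine ge_of_tendsto hlim ?_
  filter_upwards [self_mem_nhdsWithin] with t ht
  exact nuM_le_t k R hR x hx c hcd hc A hA hAS t ht

lemma nuM_mp [MeasurableSpace E] [BorelSpace E] [SecondCountableTopology E]
    (k : ℕ) (R : ℝ) (hR : 0 < R) (x : E) (hx : ‖x‖ ≠ R) (c : ℝ) (hcd : c = ‖x‖ ^ 2 - R ^ 2)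
    (hc : c ≠ 0) :
    MeasurePreserving (secEquiv c hc x) (nuM k R c x) (nuM k R c x) := by
  refine ⟨(secEquiv c hc x).measurable, ?_⟩
  have hS : MeasurableSet (Metric.sphere (0 : E) R) := Metric.isClosed_sphere.measurableSet
  have hnull : ∀ A, MeasurableSet A → nuM k R c x A = nuM k R c x (A ∩ Metric.sphere (0 : E) R) := by
    intro A hA
    rw [nuM, withDensity_apply _ hA, withDensity_apply _ (hA.inter hS), Measure.restrict_restrict hA,
      Measure.restrict_restrict (hA.inter hS), Set.inter_assoc, Set.inter_self]
  have hTS : ∀ y ∈ Metric.sphere (0 : E) R, secT c x y ∈ Metric.sphere (0 : E) R := by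
    intro y hy
    have : ‖y‖ = R := by simpa using hy
    simpa [hcd] using secT_mem x y R hR hx this
  have inv := secT_secT c hc x
  ext A hA
  rw [(secEquiv c hc x).map_apply]
  have hpm : MeasurableSet (secEquiv c hc x ⁻¹' A) := (secEquiv c hc x).measurable hA
  rw [hnull _ hpm, hnull A hA]
  have e1 : secEquiv c hc x ⁻¹' A ∩ Metric.sphere (0 : E) R
      = secT c x '' (A ∩ Metric.sphere (0 : E) R) := by
    ext y
    constructor
    · rintro ⟨h1, h2⟩
      exact ⟨secT c x y, ⟨h1, hTS y h2⟩, inv y⟩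
    · rintro ⟨z, ⟨h1, h2⟩, rfl⟩
      refine ⟨?_, hTS z h2⟩
      change secT c x (secT c x z) ∈ A
      rwa [inv]
  have e2 : A ∩ Metric.sphere (0 : E) R
      = secT c x '' (secEquiv c hc x ⁻¹' A ∩ Metric.sphere (0 : E) R) := by
    rw [e1, Set.image_image]; simp [inv]
  refine le_antisymm ?_ ?_
  · rw [e1]
    exact nuM_le k R hR x hx c hcd hc _ (hA.inter hS) Set.inter_subset_right
  · conv_lhs => rw [e2]
    exact nuM_le k R hR x hx c hcd hc _ (hpm.inter hS) Set.inter_subset_right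

lemma wt_nonneg (c : ℝ) (x y : E) : 0 ≤ wt c x y := by unfold wt; positivity

lemma odd_integral [MeasurableSpace E] [BorelSpace E] [SecondCountableTopology E]
    (k : ℕ) (R : ℝ) (hR : 0 < R) (x : E) (hx : ‖x‖ ≠ R)
    (F : ℝ → ℝ) (hF : ∀ w, F w⁻¹ = - F w) :
    ∫ y in Metric.sphere (0 : E) R, (|‖x‖ ^ 2 - ‖y‖ ^ 2| / ‖x - y‖ ^ 2) ^ ((k : ℝ) / 2)
      * F (|‖x‖ ^ 2 - ‖y‖ ^ 2| / ‖x - y‖ ^ 2) ∂μH[(k : ℝ)] = 0 := by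
  have hS : MeasurableSet (Metric.sphere (0 : E) R) := Metric.isClosed_sphere.measurableSet
  obtain ⟨c, hcd⟩ : ∃ c, c = ‖x‖ ^ 2 - R ^ 2 := ⟨_, rfl⟩
  have hc : c ≠ 0 := by
    rw [hcd, sub_ne_zero]
    intro h
    exact hx ((sq_eq_sq₀ (norm_nonneg _) hR.le).1 h)
  have h1 : ∫ y in Metric.sphere (0 : E) R, (|‖x‖ ^ 2 - ‖y‖ ^ 2| / ‖x - y‖ ^ 2) ^ ((k : ℝ) / 2)
      * F (|‖x‖ ^ 2 - ‖y‖ ^ 2| / ‖x - y‖ ^ 2) ∂μH[(k : ℝ)]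
      = ∫ y, F (wt c x y) ∂(nuM k R c x) := by
    rw [nuM, integral_withDensity_eq_integral_toReal_smul
      ((wt_measurable c x).pow_const _).ennreal_ofReal (by simp)]
    refine setIntegral_congr_fun hS (fun y hy => ?_)
    have hy' : ‖y‖ = R := by simpa using hy
    have : wt c x y = |‖x‖ ^ 2 - ‖y‖ ^ 2| / ‖x - y‖ ^ 2 := by rw [wt, hcd, hy']
    simp only [← this, smul_eq_mul]
    rw [ENNReal.toReal_ofReal (Real.rpow_nonneg (wt_nonneg c x y) _)]
  rw [h1]
  have h2 := (nuM_mp k R hR x hx c hcd hc).integral_comp' (fun y => F (wt c x y))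
  have h3 : ∀ y, F (wt c x (secEquiv c hc x y)) = - F (wt c x y) := by
    intro y
    rw [← hF, ← wt_secT c hc]; rfl
  simp only [h3, integral_neg] at h2
  linarith
end



/-- (i) `∫ ω^{k/2+ib} = ∫ ω^{k/2} cos(b log ω)` and (ii) the odd/even log-moment integrals
`∫ ω^{k/2} (log ω)^{2m+1} cos(b log ω)` and `∫ ω^{k/2} (log ω)^{2m} sin(b log ω)` vanish. -/
theorem omega_half_power_integrals
    (k : ℕ) (hk : 1 ≤ k) (R : ℝ) (hR : 0 < R)
    (x : EuclideanSpace ℝ (Fin (k + 1))) (hx : ‖x‖ ≠ R) (b : ℝ) :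
    (∫ y in Metric.sphere (0 : EuclideanSpace ℝ (Fin (k + 1))) R,
        ((|‖x‖ ^ 2 - ‖y‖ ^ 2| / ‖x - y‖ ^ 2 : ℝ) : ℂ) ^ ((k : ℂ) / 2 + Complex.I * b) ∂μH[k]
      = ((∫ y in Metric.sphere (0 : EuclideanSpace ℝ (Fin (k + 1))) R,
          (|‖x‖ ^ 2 - ‖y‖ ^ 2| / ‖x - y‖ ^ 2) ^ ((k : ℝ) / 2)
            * Real.cos (b * Real.log (|‖x‖ ^ 2 - ‖y‖ ^ 2| / ‖x - y‖ ^ 2)) ∂μH[k] : ℝ) : ℂ))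
    ∧ (∀ m : ℕ,
        (∫ y in Metric.sphere (0 : EuclideanSpace ℝ (Fin (k + 1))) R,
            (|‖x‖ ^ 2 - ‖y‖ ^ 2| / ‖x - y‖ ^ 2) ^ ((k : ℝ) / 2)
              * (Real.log (|‖x‖ ^ 2 - ‖y‖ ^ 2| / ‖x - y‖ ^ 2)) ^ (2 * m + 1)
              * Real.cos (b * Real.log (|‖x‖ ^ 2 - ‖y‖ ^ 2| / ‖x - y‖ ^ 2)) ∂μH[k] = 0)
        ∧ (∫ y in Metric.sphere (0 : EuclideanSpace ℝ (Fin (k + 1))) R,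
            (|‖x‖ ^ 2 - ‖y‖ ^ 2| / ‖x - y‖ ^ 2) ^ ((k : ℝ) / 2)
              * (Real.log (|‖x‖ ^ 2 - ‖y‖ ^ 2| / ‖x - y‖ ^ 2)) ^ (2 * m)
              * Real.sin (b * Real.log (|‖x‖ ^ 2 - ‖y‖ ^ 2| / ‖x - y‖ ^ 2)) ∂μH[k] = 0)) := by
  have hsin : ∀ m : ℕ, (∫ y in Metric.sphere (0 : EuclideanSpace ℝ (Fin (k + 1))) R,
            (|‖x‖ ^ 2 - ‖y‖ ^ 2| / ‖x - y‖ ^ 2) ^ ((k : ℝ) / 2)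
              * (Real.log (|‖x‖ ^ 2 - ‖y‖ ^ 2| / ‖x - y‖ ^ 2)) ^ (2 * m)
              * Real.sin (b * Real.log (|‖x‖ ^ 2 - ‖y‖ ^ 2| / ‖x - y‖ ^ 2)) ∂μH[k] = 0) := by
    intro m
    have := odd_integral k R hR x hx
      (fun w => (Real.log w) ^ (2 * m) * Real.sin (b * Real.log w)) (fun w => by
        simp only [Real.log_inv, mul_neg, Real.sin_neg, Even.neg_pow (even_two_mul m)])
    simpa only [mul_assoc] using this
  refine ⟨?_, fun m => ⟨?_, hsin m⟩⟩
  · have hS : MeasurableSet (Metric.sphere (0 : EuclideanSpace ℝ (Fin (k + 1))) R) :=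
      Metric.isClosed_sphere.measurableSet
    have hs0 := hsin 0
    simp only [mul_zero, pow_zero, mul_one] at hs0
    have hfin := sphere_hausdorff_lt_top k R hR
    have hint : ∀ g : ℝ → ℝ, Measurable g → (∀ w, |g w| ≤ 1) →
        IntegrableOn (fun y : EuclideanSpace ℝ (Fin (k + 1)) =>
          (|‖x‖ ^ 2 - ‖y‖ ^ 2| / ‖x - y‖ ^ 2) ^ ((k : ℝ) / 2)
            * g (|‖x‖ ^ 2 - ‖y‖ ^ 2| / ‖x - y‖ ^ 2)) (Metric.sphere 0 R) μH[k] := by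
      intro g hg hb
      have hm : Measurable (fun y : EuclideanSpace ℝ (Fin (k + 1)) =>
          |‖x‖ ^ 2 - ‖y‖ ^ 2| / ‖x - y‖ ^ 2) := by fun_prop
      refine Measure.integrableOn_of_bounded (M := (|‖x‖ ^ 2 - R ^ 2| / (‖x‖ - R) ^ 2) ^ ((k : ℝ) / 2))
        hfin.ne ((hm.pow_const _).mul (hg.comp hm)).aestronglyMeasurable ?_
      filter_upwards [ae_restrict_mem hS] with y hy
      have hy' : ‖y‖ = R := by simpa using hy
      rw [norm_mul, hy', Real.norm_eq_abs, Real.norm_eq_abs]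
      have h1 : 0 ≤ |‖x‖ ^ 2 - R ^ 2| / ‖x - y‖ ^ 2 := by positivity
      rw [abs_of_nonneg (Real.rpow_nonneg h1 _)]
      refine (mul_le_of_le_one_right (Real.rpow_nonneg h1 _) (hb _)).trans ?_
      refine Real.rpow_le_rpow h1 ?_ (by positivity)
      have h2 : 0 < (‖x‖ - R) ^ 2 := by
        have := sub_ne_zero.2 hx
        positivity
      refine div_le_div_of_nonneg_left (abs_nonneg _) h2 ?_
      have := abs_norm_sub_norm_le x y
      rw [hy'] at this
      rw [← sq_abs (‖x‖ - R)]
      exact pow_le_pow_left₀ (abs_nonneg _) this 2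
    have hcosI := hint (fun w => Real.cos (b * Real.log w)) (by fun_prop)
      (fun w => Real.abs_cos_le_one _)
    have hsinI := hint (fun w => Real.sin (b * Real.log w)) (by fun_prop)
      (fun w => Real.abs_sin_le_one _)
    have key : ∀ w : ℝ, 0 < w → (w : ℂ) ^ ((k : ℂ) / 2 + Complex.I * b) =
        ((w ^ ((k : ℝ) / 2) * Real.cos (b * Real.log w) : ℝ) : ℂ)
        + ((w ^ ((k : ℝ) / 2) * Real.sin (b * Real.log w) : ℝ) : ℂ) * Complex.I := by
      intro w hw
      have hw0 : (w : ℂ) ≠ 0 := by exact_mod_cast hw.ne'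
      rw [Complex.cpow_add _ _ hw0]
      have e1 : (w : ℂ) ^ ((k : ℂ) / 2) = ((w ^ ((k : ℝ) / 2) : ℝ) : ℂ) := by
        rw [Complex.ofReal_cpow hw.le]; push_cast; rfl
      have e2 : (w : ℂ) ^ (Complex.I * b) =
          (Real.cos (b * Real.log w) : ℂ) + (Real.sin (b * Real.log w) : ℂ) * Complex.I := by
        rw [Complex.cpow_def_of_ne_zero hw0, ← Complex.ofReal_log hw.le]
        rw [Complex.ofReal_cos, Complex.ofReal_sin, ← Complex.exp_mul_I]
        congr 1; push_cast; ring
      rw [e1, e2]; push_cast; ring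
    have hcongr : ∫ y in Metric.sphere (0 : EuclideanSpace ℝ (Fin (k + 1))) R,
        ((|‖x‖ ^ 2 - ‖y‖ ^ 2| / ‖x - y‖ ^ 2 : ℝ) : ℂ) ^ ((k : ℂ) / 2 + Complex.I * b) ∂μH[k]
        = ∫ y in Metric.sphere (0 : EuclideanSpace ℝ (Fin (k + 1))) R,
          ((((|‖x‖ ^ 2 - ‖y‖ ^ 2| / ‖x - y‖ ^ 2) ^ ((k : ℝ) / 2)
            * Real.cos (b * Real.log (|‖x‖ ^ 2 - ‖y‖ ^ 2| / ‖x - y‖ ^ 2)) : ℝ) : ℂ)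
          + (((|‖x‖ ^ 2 - ‖y‖ ^ 2| / ‖x - y‖ ^ 2) ^ ((k : ℝ) / 2)
            * Real.sin (b * Real.log (|‖x‖ ^ 2 - ‖y‖ ^ 2| / ‖x - y‖ ^ 2)) : ℝ) : ℂ)
              * Complex.I) ∂μH[k] := by
      refine setIntegral_congr_fun hS (fun y hy => ?_)
      have hy' : ‖y‖ = R := by simpa using hy
      refine key _ ?_
      have h1 : y ≠ x := by rintro rfl; exact hx hy'
      have h2 : 0 < ‖x - y‖ := norm_pos_iff.2 (sub_ne_zero.2 h1.symm)
      have h3 : ‖x‖ ^ 2 - ‖y‖ ^ 2 ≠ 0 := by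
        rw [sub_ne_zero, hy']
        intro h
        exact hx ((sq_eq_sq₀ (norm_nonneg _) hR.le).1 h)
      have := abs_pos.2 h3
      positivity
    rw [hcongr, integral_add hcosI.ofReal (hsinI.ofReal.mul_const _), integral_mul_const,
      integral_complex_ofReal, integral_complex_ofReal, hs0]
    simp
  · have := odd_integral k R hR x hx
      (fun w => (Real.log w) ^ (2 * m + 1) * Real.cos (b * Real.log w)) (fun w => by
        simp only [Real.log_inv, mul_neg, Real.cos_neg, Odd.neg_pow (odd_two_mul_add_one m),
          neg_mul])
    simpa only [mul_assoc] using this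
end
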